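/- arXiv:1103.0414 — 3 statements merged into one kernel-verified Lean document; each statement's English description precedes it below -/
import Mathlib

section
/- Let H₁ and H₂ be bounded, self-adjoint linear operators on X, each satisfying ⟨H_i x, x⟩ ≥ c_i‖x‖² for some c_i > 0 (hence invertible), and let φ : X → ℝ ∪ {+∞} be proper, convex and lower semicontinuous. Let z₁, z₂ ∈ X, and suppose p₁ minimizes x ↦ φ(x) + ½⟨H₁(x − z₁), x − z₁⟩ over X and p₂ minimizes x ↦ φ(x) + ½⟨H₂(x − z₂), x − z₂⟩ over X. Then ‖p₁ − p₂‖ ≤ √(‖H₁‖‖H₁⁻¹‖) · ‖z₁ − z₂‖ + ‖H₁⁻¹‖ · ‖(H₁ − H₂)(z₂ − p₂)‖. -/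
open scoped RealInnerProductSpace
open ContinuousLinearMap

/-! Fermat's rule says that a minimizer `p` of `x ↦ φ x + ½⟪H (x - z), x - z⟫` has `H (z - p)` as a
subgradient of `φ`. Monotonicity of subgradients then gives
`⟪H₁ d, d⟫ ≤ ⟪H₁ (z₁ - z₂) + (H₁ - H₂) (z₂ - p₂), d⟫` with `d = p₁ - p₂`. Estimating the first term
on the right by Cauchy–Schwarz in the norm of `H₁` and the second in the norm of `X`, and returning
to the norm of `X` only at the end, puts the condition number of `H₁` under a square root. -/

section Convexity

open Filter Set

variable {E : Type*} [AddCommGroup E] [Module ℝ E] {φ : E → WithTop ℝ}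

/-- Convexity of an extended-valued function. The weights are strictly positive, so that the
convention for `0 * ⊤` plays no role. -/
def IsConvexFun (φ : E → WithTop ℝ) : Prop :=
  ∀ x y : E, ∀ a b : ℝ, 0 < a → 0 < b → a + b = 1 →
    φ (a • x + b • y) ≤ (a : WithTop ℝ) * φ x + (b : WithTop ℝ) * φ y

theorem IsConvexFun.add_neg_lineDeriv_le_of_isMinOn_add (hφ : IsConvexFun φ) {q : E → ℝ} {q' : ℝ}
    {p x : E} (hp : IsMinOn (fun y => φ y + (q y : WithTop ℝ)) univ p)
    (hq : HasLineDerivAt ℝ q q' p (x - p)) :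
    φ p + ((-q' : ℝ) : WithTop ℝ) ≤ φ x := by
  rw [isMinOn_univ_iff] at hp
  by_cases hx : φ x = ⊤
  · exact hx ▸ le_top
  have hpx : φ p ≠ ⊤ := by
    have hfin : φ x + (q x : WithTop ℝ) ≠ ⊤ := WithTop.add_ne_top.2 ⟨hx, WithTop.coe_ne_top⟩
    exact (WithTop.add_ne_top.1 (ne_top_of_le_ne_top hfin (hp x))).1
  obtain ⟨v, hv⟩ := WithTop.ne_top_iff_exists.1 hx
  obtain ⟨u, hu⟩ := WithTop.ne_top_iff_exists.1 hpx
  have slope_ge : ∀ t ∈ Ioo (0 : ℝ) 1, u - v ≤ t⁻¹ • (q (p + t • (x - p)) - q p) := by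
    rintro t ⟨ht₀, ht₁⟩
    have hsegment : (1 - t) • p + t • x = p + t • (x - p) := by module
    have hconv := hφ p x (1 - t) t (sub_pos.2 ht₁) ht₀ (sub_add_cancel 1 t)
    have hmin := (hp _).trans (add_le_add_left hconv _)
    rw [hsegment, ← hu, ← hv] at hmin
    have hreal : u + q p ≤ (1 - t) * u + t * v + q (p + t • (x - p)) := by exact_mod_cast hmin
    rw [smul_eq_mul, le_inv_mul_iff₀ ht₀]
    linarith
  have hlim : u - v ≤ q' := ge_of_tendsto hq.tendsto_slope_zero_right
    (eventually_of_mem (Ioo_mem_nhdsGT one_pos) slope_ge)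
  rw [← hu, ← hv]
  exact_mod_cast (by linarith : u + -q' ≤ v)

end Convexity

section Prox

variable {X : Type*} [NormedAddCommGroup X] [InnerProductSpace ℝ X]

section Subgradient

variable {φ : X → WithTop ℝ} {H : X →L[ℝ] X}

/-- `g` is a subgradient of `φ` at `p`. There is no requirement that `φ p` be finite; it is whenever
`φ` is proper. -/
def IsSubgradientAt (φ : X → WithTop ℝ) (g p : X) : Prop :=
  ∀ x : X, φ p + ((⟪g, x - p⟫ : ℝ) : WithTop ℝ) ≤ φ x

theorem IsSubgradientAt.ne_top {g p : X} (hg : IsSubgradientAt φ g p) (hproper : ∃ x, φ x ≠ ⊤) :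
    φ p ≠ ⊤ := by
  obtain ⟨x, hx⟩ := hproper
  exact (WithTop.add_ne_top.1 (ne_top_of_le_ne_top hx (hg x))).1

theorem IsSubgradientAt.inner_sub_nonneg {g₁ g₂ p₁ p₂ : X} (hg₁ : IsSubgradientAt φ g₁ p₁)
    (hg₂ : IsSubgradientAt φ g₂ p₂) (hproper : ∃ x, φ x ≠ ⊤) :
    0 ≤ ⟪g₁ - g₂, p₁ - p₂⟫ := by
  have h₁₂ := hg₁ p₂
  have h₂₁ := hg₂ p₁
  lift φ p₁ to ℝ using hg₁.ne_top hproper with u₁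
  lift φ p₂ to ℝ using hg₂.ne_top hproper with u₂
  norm_cast at h₁₂ h₂₁
  rw [← neg_sub p₁ p₂, inner_neg_right] at h₁₂
  rw [inner_sub_left]
  linarith

/-- `p` is a value of the proximity operator `prox_φ^H` at `z`, expressed as minimality, so that
neither existence nor uniqueness of the minimizer is built in. -/
def IsProx (H : X →L[ℝ] X) (φ : X → WithTop ℝ) (z p : X) : Prop :=
  IsMinOn (fun x => φ x + ((2⁻¹ * ⟪H (x - z), x - z⟫ : ℝ) : WithTop ℝ)) Set.univ p

theorem hasLineDerivAt_half_inner_map_sub (hH : H.IsSymmetric) (z p v : X) :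
    HasLineDerivAt ℝ (fun x => 2⁻¹ * ⟪H (x - z), x - z⟫) ⟪H (p - z), v⟫ p v := by
  have hquad := (hH.hasStrictFDerivAt_reApplyInnerSelf (p - z)).hasFDerivAt
  have hderiv := ((hquad.comp p (hasFDerivAt_sub_const z)).const_mul 2⁻¹).hasLineDerivAt v
  have hvalue : ⟪H (p - z), v⟫ = 2⁻¹ * (2 • ⟪H (p - z), v⟫) := by
    rw [two_nsmul]
    ring
  rw [hvalue]
  exact hderiv

theorem IsProx.isSubgradientAt {z p : X} (hp : IsProx H φ z p) (hH : H.IsSymmetric)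
    (hφ : IsConvexFun φ) : IsSubgradientAt φ (H (z - p)) p := by
  intro x
  have hfermat := hφ.add_neg_lineDeriv_le_of_isMinOn_add hp
    (hasLineDerivAt_half_inner_map_sub hH z p (x - p))
  rwa [← inner_neg_left, ← map_neg, neg_sub] at hfermat

end Subgradient

section EnergyNorm

variable {H K : X →L[ℝ] X}

/-- The seminorm `x ↦ √⟪H x, x⟫` attached to a positive operator `H`; where `⟪H x, x⟫ < 0` its value is
`0`. -/
noncomputable def energyNorm (H : X →L[ℝ] X) (x : X) : ℝ :=
  √⟪H x, x⟫

theorem energyNorm_nonneg (H : X →L[ℝ] X) (x : X) : 0 ≤ energyNorm H x :=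
  Real.sqrt_nonneg _

theorem energyNorm_le (H : X →L[ℝ] X) (x : X) : energyNorm H x ≤ √‖H‖ * ‖x‖ := by
  refine Real.sqrt_le_iff.2 ⟨by positivity, ?_⟩
  calc ⟪H x, x⟫ ≤ ‖H x‖ * ‖x‖ := real_inner_le_norm _ _
    _ ≤ ‖H‖ * ‖x‖ * ‖x‖ := by gcongr; exact H.le_opNorm x
    _ = (√‖H‖ * ‖x‖) ^ 2 := by rw [mul_pow, Real.sq_sqrt (norm_nonneg H)]; ring

theorem energyNorm_sq (hH : H.IsPositive) (x : X) : energyNorm H x ^ 2 = ⟪H x, x⟫ :=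
  Real.sq_sqrt (hH.inner_nonneg_left x)

theorem inner_map_le_energyNorm_mul_energyNorm (hH : H.IsPositive) (x y : X) :
    ⟪H x, y⟫ ≤ energyNorm H x * energyNorm H y := by
  let B : LinearMap.BilinForm ℝ X := innerₗ X ∘ₗ (H : X →ₗ[ℝ] X)
  have hB : LinearMap.IsSymm B :=
    ⟨fun x y => (hH.inner_left_eq_inner_right x y).trans (real_inner_comm _ _)⟩
  rw [energyNorm, energyNorm, ← Real.sqrt_mul (hH.inner_nonneg_left x)]
  exact Real.le_sqrt_of_sq_le (B.apply_sq_le_of_symm hH.inner_nonneg_left hB x y)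

theorem norm_le_sqrt_norm_mul_energyNorm (hH : H.IsPositive) (hHK : H ∘L K = 1) (x : X) :
    ‖x‖ ≤ √‖K‖ * energyNorm H x := by
  have hHKx : H (K x) = x := DFunLike.congr_fun hHK x
  have energyNorm_K : energyNorm H (K x) ≤ √‖K‖ * ‖x‖ := by
    have hswap : energyNorm H (K x) = energyNorm K x := by
      rw [energyNorm, energyNorm, hHKx, real_inner_comm]
    exact hswap.trans_le (energyNorm_le K x)
  have hsq : ‖x‖ * ‖x‖ ≤ √‖K‖ * energyNorm H x * ‖x‖ := by
    calc ‖x‖ * ‖x‖ = ⟪H (K x), x⟫ := by rw [hHKx, real_inner_self_eq_norm_mul_norm]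
      _ ≤ energyNorm H (K x) * energyNorm H x := inner_map_le_energyNorm_mul_energyNorm hH _ _
      _ ≤ √‖K‖ * ‖x‖ * energyNorm H x :=
        mul_le_mul_of_nonneg_right energyNorm_K (energyNorm_nonneg H x)
      _ = √‖K‖ * energyNorm H x * ‖x‖ := by ring
  rcases (norm_nonneg x).eq_or_lt with hx | hx
  · rw [← hx]
    exact mul_nonneg (Real.sqrt_nonneg _) (energyNorm_nonneg H x)
  · exact le_of_mul_le_mul_right hsq hx

theorem energyNorm_le_of_inner_map_self_le (hH : H.IsPositive) (hHK : H ∘L K = 1) {d w r : X}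
    (hd : ⟪H d, d⟫ ≤ ⟪H w + r, d⟫) :
    energyNorm H d ≤ √‖H‖ * ‖w‖ + √‖K‖ * ‖r‖ := by
  have hmul : energyNorm H d * energyNorm H d ≤
      (√‖H‖ * ‖w‖ + √‖K‖ * ‖r‖) * energyNorm H d := by
    calc energyNorm H d * energyNorm H d = ⟪H d, d⟫ := by rw [← energyNorm_sq hH, sq]
      _ ≤ ⟪H w, d⟫ + ⟪r, d⟫ := hd.trans_eq (inner_add_left _ _ _)
      _ ≤ energyNorm H w * energyNorm H d + ‖r‖ * ‖d‖ :=
        add_le_add (inner_map_le_energyNorm_mul_energyNorm hH w d) (real_inner_le_norm r d)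
      _ ≤ √‖H‖ * ‖w‖ * energyNorm H d + ‖r‖ * (√‖K‖ * energyNorm H d) := by
        gcongr
        · exact energyNorm_nonneg H d
        · exact energyNorm_le H w
        · exact norm_le_sqrt_norm_mul_energyNorm hH hHK d
      _ = (√‖H‖ * ‖w‖ + √‖K‖ * ‖r‖) * energyNorm H d := by ring
  rcases (energyNorm_nonneg H d).eq_or_lt with h₀ | hpos
  · rw [← h₀]
    positivity
  · exact le_of_mul_le_mul_right hmul hpos

theorem norm_le_of_inner_map_self_le (hH : H.IsPositive) (hHK : H ∘L K = 1) {d w r : X}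
    (hd : ⟪H d, d⟫ ≤ ⟪H w + r, d⟫) :
    ‖d‖ ≤ √(‖H‖ * ‖K‖) * ‖w‖ + ‖K‖ * ‖r‖ := by
  calc ‖d‖ ≤ √‖K‖ * energyNorm H d := norm_le_sqrt_norm_mul_energyNorm hH hHK d
    _ ≤ √‖K‖ * (√‖H‖ * ‖w‖ + √‖K‖ * ‖r‖) := by
      gcongr
      exact energyNorm_le_of_inner_map_self_le hH hHK hd
    _ = √‖H‖ * √‖K‖ * ‖w‖ + √‖K‖ * √‖K‖ * ‖r‖ := by ring
    _ = √(‖H‖ * ‖K‖) * ‖w‖ + ‖K‖ * ‖r‖ := by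
      rw [Real.sqrt_mul (norm_nonneg H), Real.mul_self_sqrt (norm_nonneg K)]

end EnergyNorm

theorem stmt_9_general {H₁ H₂ H₁inv : X →L[ℝ] X} (hH₁ : H₁.IsPositive) (hH₂ : H₂.IsSymmetric)
    (hinv : H₁ ∘L H₁inv = 1) {φ : X → WithTop ℝ} (hproper : ∃ x, φ x ≠ ⊤) (hφ : IsConvexFun φ)
    {z₁ z₂ p₁ p₂ : X} (hp₁ : IsProx H₁ φ z₁ p₁) (hp₂ : IsProx H₂ φ z₂ p₂) :
    ‖p₁ - p₂‖ ≤ √(‖H₁‖ * ‖H₁inv‖) * ‖z₁ - z₂‖ + ‖H₁inv‖ * ‖(H₁ - H₂) (z₂ - p₂)‖ := by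
  have hmono : 0 ≤ ⟪H₁ (z₁ - p₁) - H₂ (z₂ - p₂), p₁ - p₂⟫ :=
    (hp₁.isSubgradientAt hH₁.isSymmetric hφ).inner_sub_nonneg (hp₂.isSubgradientAt hH₂ hφ) hproper
  have hsplit : H₁ (z₁ - p₁) - H₂ (z₂ - p₂) =
      H₁ (z₁ - z₂) + (H₁ - H₂) (z₂ - p₂) - H₁ (p₁ - p₂) := by
    simp only [map_sub, sub_apply]
    abel
  rw [hsplit, inner_sub_left, sub_nonneg] at hmono
  exact norm_le_of_inner_map_self_le hH₁ hinv hmono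

end Prox

/-- Joint dependence of the proximity operator on the point and on the metric:
if `p₁ = prox_φ^{H₁}(z₁)` and `p₂ = prox_φ^{H₂}(z₂)` for bounded self-adjoint coercive
operators `H₁, H₂`, then
`‖p₁ − p₂‖ ≤ √(‖H₁‖‖H₁⁻¹‖)·‖z₁ − z₂‖ + ‖H₁⁻¹‖·‖(H₁ − H₂)(z₂ − p₂)‖`. -/
theorem stmt_9 {X : Type*} [NormedAddCommGroup X] [InnerProductSpace ℝ X] [CompleteSpace X]
    (H₁ H₂ : X →L[ℝ] X)
    (hH₁sa : ∀ x y : X, ⟪H₁ x, y⟫ = ⟪x, H₁ y⟫)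
    (hH₂sa : ∀ x y : X, ⟪H₂ x, y⟫ = ⟪x, H₂ y⟫)
    (hH₁coer : ∃ c : ℝ, 0 < c ∧ ∀ x : X, c * ‖x‖ ^ 2 ≤ ⟪H₁ x, x⟫)
    (hH₂coer : ∃ c : ℝ, 0 < c ∧ ∀ x : X, c * ‖x‖ ^ 2 ≤ ⟪H₂ x, x⟫)
    (φ : X → WithTop ℝ)
    (hproper : ∃ x, φ x ≠ ⊤)
    (hconv : ∀ x y : X, ∀ a b : ℝ, 0 ≤ a → 0 ≤ b → a + b = 1 →
      φ (a • x + b • y) ≤ (a : WithTop ℝ) * φ x + (b : WithTop ℝ) * φ y)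
    (hlsc : LowerSemicontinuous φ)
    (z₁ z₂ p₁ p₂ : X)
    (hp₁ : ∀ x : X, φ p₁ + ((2⁻¹ * ⟪H₁ (p₁ - z₁), p₁ - z₁⟫ : ℝ) : WithTop ℝ)
        ≤ φ x + ((2⁻¹ * ⟪H₁ (x - z₁), x - z₁⟫ : ℝ) : WithTop ℝ))
    (hp₂ : ∀ x : X, φ p₂ + ((2⁻¹ * ⟪H₂ (p₂ - z₂), p₂ - z₂⟫ : ℝ) : WithTop ℝ)
        ≤ φ x + ((2⁻¹ * ⟪H₂ (x - z₂), x - z₂⟫ : ℝ) : WithTop ℝ)) :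
    ∀ H₁inv : X →L[ℝ] X, H₁inv ∘L H₁ = 1 → H₁ ∘L H₁inv = 1 →
      ‖p₁ - p₂‖ ≤ Real.sqrt (‖H₁‖ * ‖H₁inv‖) * ‖z₁ - z₂‖
        + ‖H₁inv‖ * ‖(H₁ - H₂) (z₂ - p₂)‖ := by
  obtain ⟨c, hc, hcoer⟩ := hH₁coer
  have hH₁ : H₁.IsPositive := ⟨hH₁sa, fun x => (by positivity : 0 ≤ c * ‖x‖ ^ 2).trans (hcoer x)⟩
  exact fun _ _ hinv => stmt_9_general hH₁ hH₂sa hinv hproper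
    (fun x y a b ha hb => hconv x y a b ha.le hb.le) (isMinOn_univ_iff.2 hp₁)
    (isMinOn_univ_iff.2 hp₂)
end

section
/- Assume F : Ω → Y is Gâteaux differentiable, J : X → ℝ ∪ {+∞} is proper, convex and lower semicontinuous, x* ∈ Ω is a local minimizer of Φ₀(x) = ½‖F(x)‖² + J(x) with J(x*) < +∞ and F′(x*) injective with closed range, U ⊆ Ω is open and star-shaped with respect to x*, and F′ satisfies the center Lipschitz condition of center x* with L average on U, where L : [0,R) → ℝ is continuous, positive and increasing. Set α = ‖F(x*)‖, β = ‖F′(x*)†‖, κ = ‖F′(x*)†‖‖F′(x*)‖, and R̄ = sup{ r ∈ (0,R) : γ₀(r)·r < 1/β }. Then for any r with 0 < r ≤ R̄ and B_r(x*) ⊆ U, and any x ∈ B_r(x*): F′(x) is injective with closed range, and the unique minimizer p of z ↦ ½‖F(x) + F′(x)(z − x)‖² + J(z) over X satisfies ‖p − x*‖ ≤ q(‖x − x*‖)·‖x − x*‖, where q : [0,R̄) → ℝ₊ is defined by q(r) = β/(1 − βγ₀(r)r) · { (βγ₀(r)γ^c(r)r² + κγ^c(r)r)/(1 − βγ₀(r)r)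 + (1+√2)αβ²γ₀(r)²r/(1 − βγ₀(r)r) + ((1+√2)κ + 1)αβγ₀(r)/(1 − βγ₀(r)r) }; moreover q is continuous and strictly increasing. -/
open scoped ENNReal
open ContinuousLinearMap

/- Adding the optimality condition of `x*` for `½‖F‖² + J` to that of the step `p` for the
linearized problem eliminates `J` and leaves, with `A = F' x`, `A₀ = F' x*` and `d = p - x*`,
`‖A d‖² ≤ ‖F x*‖ ‖A - A₀‖ ‖d‖ + ‖F x - F x* - A (x - x*)‖ ‖A d‖`. By the center Lipschitz condition
the Taylor remainder is at most `γᶜ(r) r²` and `‖A - A₀‖ ≤ γ₀(r) r` for `r = ‖x - x*‖`, so `A` is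
bounded below by `(1 - βγ₀(r)r) / β`, which yields the estimate. Monotonicity and continuity of
`q` come from writing `γ₀` and `γᶜ` as `∫₀¹ w(s) L(sr) ds` with a fixed weight `w ≥ 0`. -/

section

open Set Filter Topology intervalIntegral
open MeasureTheory (volume)
open scoped NNReal

section RadialMeans

/-- The half-open interval `[0, R)` of real numbers, for a possibly infinite `R`. -/
def radii (R : ℝ≥0∞) : Set ℝ :=
  {u | 0 ≤ u ∧ ENNReal.ofReal u < R}

/-- The weighted mean `∫₀¹ w(s) L(s r) ds` of `L` along the segment from `0` to `r`. Both `γ₀` and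
`γᶜ` are of this form, which removes the case distinction at `r = 0`. -/
noncomputable def radialMean (w L : ℝ → ℝ) (r : ℝ) : ℝ :=
  ∫ s in (0 : ℝ)..1, w s * L (s * r)

/-- The function `γ₀`: the mean of `L` over `[0, r]`, extended by its limit at `r = 0`. -/
noncomputable def lipschitzMean (L : ℝ → ℝ) (r : ℝ) : ℝ :=
  if r = 0 then L 0 else (∫ u in (0 : ℝ)..r, L u) / r

/-- The function `γᶜ`: the coefficient of `r ^ 2` in the bound for the Taylor remainder of a map
whose derivative is center Lipschitz with `L` average, extended by its limit at `r = 0`. -/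
noncomputable def taylorMean (L : ℝ → ℝ) (r : ℝ) : ℝ :=
  if r = 0 then 3 * L 0 / 2 else (∫ u in (0 : ℝ)..r, (2 * r - u) * L u) / r ^ 2

variable {L w : ℝ → ℝ} {I : Set ℝ} {r : ℝ}

lemma mem_radii_of_le {R : ℝ≥0∞} {u : ℝ} (hr : r ∈ radii R) (hu : 0 ≤ u) (hur : u ≤ r) :
    u ∈ radii R :=
  ⟨hu, (ENNReal.ofReal_le_ofReal hur).trans_lt hr.2⟩

lemma Icc_subset_radii {R : ℝ≥0∞} (hr : r ∈ radii R) : Icc 0 r ⊆ radii R :=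
  fun _ hu => mem_radii_of_le hr hu.1 hu.2

lemma starConvex_radii (R : ℝ≥0∞) : StarConvex ℝ 0 (radii R) :=
  starConvex_zero_iff.2 fun _ hr _ ha₀ ha₁ =>
    mem_radii_of_le hr (mul_nonneg ha₀ hr.1) (mul_le_of_le_one_left hr.1 ha₁)

lemma lipschitzMean_mul_self (L : ℝ → ℝ) (r : ℝ) :
    lipschitzMean L r * r = ∫ u in (0 : ℝ)..r, L u := by
  by_cases hr : r = 0
  · simp [hr]
  · simp [lipschitzMean, hr]

lemma taylorMean_mul_sq (L : ℝ → ℝ) (r : ℝ) :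
    taylorMean L r * r ^ 2 = ∫ u in (0 : ℝ)..r, (2 * r - u) * L u := by
  by_cases hr : r = 0
  · simp [hr]
  · simp [taylorMean, hr]

lemma integral_two_sub : ∫ s in (0 : ℝ)..1, (2 - s) = 3 / 2 := by
  rw [integral_sub (by simp) (by simp)]
  norm_num

lemma lipschitzMean_eq_radialMean (L : ℝ → ℝ) :
    lipschitzMean L = radialMean (fun _ => 1) L := by
  funext r
  by_cases hr : r = 0
  · simp [lipschitzMean, radialMean, hr]
  · simp [lipschitzMean, radialMean, hr, div_eq_inv_mul]

lemma taylorMean_eq_radialMean (L : ℝ → ℝ) :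
    taylorMean L = radialMean (fun s => 2 - s) L := by
  funext r
  by_cases hr : r = 0
  · simp only [taylorMean, radialMean, hr, if_true, mul_zero, integral_mul_const, integral_two_sub]
    ring
  · have hsubst : ∫ u in (0 : ℝ)..r, (2 * r - u) * L u
        = r * ∫ s in (0 : ℝ)..1, (2 * r - s * r) * L (s * r) := by
      simpa using (mul_integral_comp_mul_right (a := 0) (b := 1)
        (f := fun u => (2 * r - u) * L u) r).symm
    have hfactor : ∫ s in (0 : ℝ)..1, (2 * r - s * r) * L (s * r) = r * radialMean (2 - ·) L r := by
      rw [radialMean, ← integral_const_mul]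
      congr 1 with s
      ring
    rw [taylorMean, if_neg hr, hsubst, hfactor]
    field_simp

lemma continuousOn_radialMean (hI : StarConvex ℝ 0 I) (hw : Continuous w) (hL : ContinuousOn L I) :
    ContinuousOn (radialMean w L) I := by
  have hmem (p : I × ℝ) : (projIcc (0 : ℝ) 1 zero_le_one p.2 : ℝ) * p.1 ∈ I :=
    hI.smul_mem p.1.2 (projIcc 0 1 zero_le_one p.2).2.1 (projIcc 0 1 zero_le_one p.2).2.2
  have hLproj : Continuous fun p : I × ℝ => L (projIcc (0 : ℝ) 1 zero_le_one p.2 * p.1) :=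
    hL.comp_continuous (by fun_prop) hmem
  have hmean : Continuous fun r : I =>
      ∫ s in (0 : ℝ)..1, w s * L (projIcc (0 : ℝ) 1 zero_le_one s * r) :=
    continuous_parametric_intervalIntegral_of_continuous'
      ((hw.comp continuous_snd).mul hLproj) 0 1
  rw [continuousOn_iff_continuous_domRestrict]
  refine hmean.congr fun r => integral_congr fun s hs => ?_
  rw [uIcc_of_le zero_le_one] at hs
  simp only [projIcc_of_mem zero_le_one hs]

lemma intervalIntegrable_radialMean (hI : StarConvex ℝ 0 I) (hw : Continuous w)
    (hL : ContinuousOn L I) (hr : r ∈ I) :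
    IntervalIntegrable (fun s => w s * L (s * r)) volume 0 1 := by
  refine ContinuousOn.intervalIntegrable ?_
  rw [uIcc_of_le zero_le_one]
  exact hw.continuousOn.mul (hL.comp (by fun_prop) fun s hs => hI.smul_mem hr hs.1 hs.2)

lemma monotoneOn_radialMean (hI : StarConvex ℝ 0 I) (hw : Continuous w)
    (hw₀ : ∀ s ∈ Icc (0 : ℝ) 1, 0 ≤ w s) (hL : ContinuousOn L I) (hmono : MonotoneOn L I) :
    MonotoneOn (radialMean w L) I := by
  intro a ha b hb hab
  refine integral_mono_on zero_le_one (intervalIntegrable_radialMean hI hw hL ha)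
    (intervalIntegrable_radialMean hI hw hL hb) fun s hs => ?_
  have hmono_s : L (s * a) ≤ L (s * b) :=
    hmono (hI.smul_mem ha hs.1 hs.2) (hI.smul_mem hb hs.1 hs.2)
      (mul_le_mul_of_nonneg_left hab hs.1)
  exact mul_le_mul_of_nonneg_left hmono_s (hw₀ s hs)

lemma radialMean_pos (hI : StarConvex ℝ 0 I) (hw : Continuous w)
    (hw₀ : ∀ s ∈ Icc (0 : ℝ) 1, 0 ≤ w s) (hw_int : 0 < ∫ s in (0 : ℝ)..1, w s)
    (hL : ContinuousOn L I) (hmono : MonotoneOn L I) (hL₀ : 0 < L 0) (hr : r ∈ I) (hr₀ : 0 ≤ r) :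
    0 < radialMean w L r := by
  have hzero : 0 < radialMean w L 0 := by
    simpa only [radialMean, mul_zero, integral_mul_const] using mul_pos hw_int hL₀
  exact hzero.trans_le
    (monotoneOn_radialMean hI hw hw₀ hL hmono (hI.mem ⟨r, hr⟩) hr hr₀)

section Specializations

variable (hI : StarConvex ℝ 0 I) (hL : ContinuousOn L I)
include hI hL

lemma continuousOn_lipschitzMean : ContinuousOn (lipschitzMean L) I := by
  rw [lipschitzMean_eq_radialMean]
  exact continuousOn_radialMean hI continuous_const hL

lemma continuousOn_taylorMean : ContinuousOn (taylorMean L) I := by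
  rw [taylorMean_eq_radialMean]
  exact continuousOn_radialMean hI (by fun_prop) hL

variable (hmono : MonotoneOn L I)
include hmono

lemma monotoneOn_lipschitzMean : MonotoneOn (lipschitzMean L) I := by
  rw [lipschitzMean_eq_radialMean]
  exact monotoneOn_radialMean hI continuous_const (fun _ _ => zero_le_one) hL hmono

lemma monotoneOn_taylorMean : MonotoneOn (taylorMean L) I := by
  rw [taylorMean_eq_radialMean]
  exact monotoneOn_radialMean hI (by fun_prop) (fun s hs => by linarith [hs.2]) hL hmono

variable (hL₀ : 0 < L 0) (hr : r ∈ I) (hr₀ : 0 ≤ r)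
include hL₀ hr hr₀

lemma lipschitzMean_pos : 0 < lipschitzMean L r := by
  rw [lipschitzMean_eq_radialMean]
  exact radialMean_pos hI continuous_const (fun _ _ => zero_le_one) (by simp) hL hmono hL₀ hr hr₀

lemma taylorMean_pos : 0 < taylorMean L r := by
  rw [taylorMean_eq_radialMean]
  exact radialMean_pos hI (by fun_prop) (fun s hs => by linarith [hs.2])
    (by rw [integral_two_sub]; norm_num) hL hmono hL₀ hr hr₀

end Specializations

end RadialMeans

section TaylorRemainder

variable {X Y : Type*} [NormedAddCommGroup X] [NormedSpace ℝ X] [NormedAddCommGroup Y]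
  [NormedSpace ℝ Y]

lemma hasDerivAt_comp_add_smul {F : X → Y} {a v : X} {t : ℝ} {D : Y}
    (h : HasLineDerivAt ℝ F D (a + t • v) v) : HasDerivAt (fun s : ℝ => F (a + s • v)) D t := by
  have hshift : HasDerivAt (fun s : ℝ => F (a + t • v + (s - t) • v)) D t :=
    HasDerivAt.comp_sub_const t t (by rw [sub_self]; exact h)
  refine hshift.congr_of_eventuallyEq (.of_forall fun s => congrArg F ?_)
  module

lemma norm_sub_sub_le_integral {F : X → Y} {F' : X → X →L[ℝ] Y} {U : Set X} {a x : X}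
    {ω : ℝ → ℝ} (hU : StarConvex ℝ a U) (hx : x ∈ U)
    (hF : ∀ y ∈ U, ∀ v, HasLineDerivAt ℝ F (F' y v) y v)
    (hω : ContinuousOn ω (Icc 0 ‖x - a‖)) (hF' : ∀ y ∈ U, ‖F' y - F' a‖ ≤ ω ‖y - a‖) :
    ‖F x - F a - F' a (x - a)‖ ≤ ∫ u in (0 : ℝ)..‖x - a‖, ω u := by
  set v := x - a with hv
  have hmem {t : ℝ} (ht : t ∈ Icc (0 : ℝ) 1) : a + t • v ∈ U :=
    hU.add_smul_sub_mem hx ht.1 ht.2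
  have hderiv {t : ℝ} (ht : t ∈ Icc (0 : ℝ) 1) :
      HasDerivAt (fun s : ℝ => F (a + s • v) - s • F' a v) ((F' (a + t • v) - F' a) v) t := by
    simpa using (hasDerivAt_comp_add_smul (hF _ (hmem ht) v)).fun_sub
      ((hasDerivAt_id t).smul_const (F' a v))
  have hbound {t : ℝ} (ht : t ∈ Icc (0 : ℝ) 1) :
      ‖(F' (a + t • v) - F' a) v‖ ≤ ‖v‖ * ω (t * ‖v‖) := by
    have hω_t := hF' _ (hmem ht)
    rw [add_sub_cancel_left, norm_smul, Real.norm_of_nonneg ht.1] at hω_t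
    rw [mul_comm]
    exact le_of_opNorm_le _ hω_t v
  have hint : IntervalIntegrable (fun t => ‖v‖ * ω (t * ‖v‖)) volume 0 1 := by
    refine ContinuousOn.intervalIntegrable ?_
    rw [uIcc_of_le zero_le_one]
    exact continuousOn_const.mul (hω.comp (by fun_prop) fun t ht =>
      ⟨mul_nonneg ht.1 (norm_nonneg v), mul_le_of_le_one_left (norm_nonneg v) ht.2⟩)
  have hmean := norm_sub_le_integral_of_norm_deriv_le_of_le zero_le_one
    (fun t ht => (hderiv ht).continuousAt.continuousWithinAt)
    (fun t ht => (hderiv (Ioo_subset_Icc_self ht)).differentiableAt.differentiableWithinAt)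
    (.of_forall fun t ht => by
      rw [(hderiv (Ioo_subset_Icc_self ht)).deriv]
      exact hbound (Ioo_subset_Icc_self ht)) hint
  calc ‖F x - F a - F' a v‖ = ‖F (a + (1:ℝ) • v) - (1:ℝ) • F' a v
          - (F (a + (0 : ℝ) • v) - (0 : ℝ) • F' a v)‖ := by
        simp [hv, sub_right_comm]
    _ ≤ ∫ t in (0 : ℝ)..1, ‖v‖ * ω (t * ‖v‖) := hmean
    _ = ∫ u in (0 : ℝ)..‖v‖, ω u := by simp [integral_const_mul]

lemma integral_primitive {L : ℝ → ℝ} {a b : ℝ} (hL : ContinuousOn L (uIcc a b)) :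
    ∫ v in a..b, ∫ u in a..v, L u = ∫ u in a..b, (b - u) * L u := by
  have hderiv (v : ℝ) (hv : v ∈ Ioo (min a b) (max a b)) :
      HasDerivAt (fun v => ∫ u in a..v, L u) (L v) v :=
    integral_hasDerivAt_right
      (hL.mono (uIcc_subset_uIcc_left (Ioo_subset_Icc_self hv))).intervalIntegrable
      ((hL.mono Ioo_subset_Icc_self).stronglyMeasurableAtFilter isOpen_Ioo v hv)
      (hL.continuousAt (Icc_mem_nhds hv.1 hv.2))
  have hparts := integral_mul_deriv_eq_deriv_mul_of_hasDerivAt (u := fun v => b - v)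
    (u' := fun _ => -1) (by fun_prop) (continuousOn_primitive_interval hL.integrableOn_uIcc)
    (fun v _ => (hasDerivAt_id v).const_sub b) hderiv (by simp) hL.intervalIntegrable
  simpa using hparts.symm

lemma norm_sub_sub_le_taylorMean {F : X → Y} {F' : X → X →L[ℝ] Y} {U : Set X} {a x : X}
    {L : ℝ → ℝ} (hU : StarConvex ℝ a U) (hx : x ∈ U)
    (hF : ∀ y ∈ U, ∀ v, HasLineDerivAt ℝ F (F' y v) y v)
    (hL : ContinuousOn L (Icc 0 ‖x - a‖))
    (hcen : ∀ y ∈ U, ‖F' y - F' a‖ ≤ ∫ u in (0 : ℝ)..‖y - a‖, L u) :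
    ‖F x - F a - F' x (x - a)‖ ≤ taylorMean L ‖x - a‖ * ‖x - a‖ ^ 2 := by
  set r := ‖x - a‖ with hr
  rw [← uIcc_of_le (norm_nonneg (x - a))] at hL
  have hcenter : ‖F x - F a - F' a (x - a)‖ ≤ ∫ u in (0 : ℝ)..r, (r - u) * L u := by
    rw [← integral_primitive hL]
    refine norm_sub_sub_le_integral hU hx hF ?_ hcen
    rw [← uIcc_of_le (norm_nonneg (x - a))]
    exact continuousOn_primitive_interval hL.integrableOn_uIcc
  have hslope : ‖(F' x - F' a) (x - a)‖ ≤ ∫ u in (0 : ℝ)..r, r * L u := by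
    rw [integral_const_mul, mul_comm]
    exact le_of_opNorm_le _ (hcen x hx) _
  calc ‖F x - F a - F' x (x - a)‖
      = ‖F x - F a - F' a (x - a) - (F' x - F' a) (x - a)‖ := by simp
    _ ≤ (∫ u in (0 : ℝ)..r, (r - u) * L u) + ∫ u in (0 : ℝ)..r, r * L u :=
        (norm_sub_le _ _).trans (add_le_add hcenter hslope)
    _ = ∫ u in (0 : ℝ)..r, (2 * r - u) * L u := by
        rw [← integral_add (ContinuousOn.intervalIntegrable (by fun_prop))
          (ContinuousOn.intervalIntegrable (by fun_prop))]
        congr 1 with u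
        ring
    _ = taylorMean L r * r ^ 2 := (taylorMean_mul_sq L r).symm

end TaylorRemainder

section CompositeMinimization

variable {X Y : Type*}

/-- The epigraph of `J : X → ℝ ∪ {+∞}`. Minimizing over it replaces `J` by the real coordinate of
`X × ℝ`, so that no arithmetic with `+∞` is needed. -/
def epigraph (J : X → WithTop ℝ) : Set (X × ℝ) :=
  {y | J y.1 ≤ y.2}

/-- The objective `½‖G‖² + J`, as a real-valued function on the epigraph of `J`. -/
noncomputable def halfSqObjective [NormedAddCommGroup Y] (G : X → Y) (y : X × ℝ) : ℝ :=
  2⁻¹ * ‖G y.1‖ ^ 2 + y.2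

variable {J : X → WithTop ℝ} {G : X → Y} {x p : X} {w : ℝ}

lemma isClosed_epigraph [TopologicalSpace X] (hJ : LowerSemicontinuous J) : IsClosed (epigraph J) :=
  hJ.isClosed_epigraph.preimage (continuous_id.prodMap WithTop.continuous_coe)

lemma exists_coe_eq_of_le_coe {c : WithTop ℝ} (h : c ≤ w) : ∃ w' : ℝ, c = w' ∧ w' ≤ w :=
  WithTop.le_coe_iff.1 h

lemma convex_epigraph [AddCommGroup X] [Module ℝ X]
    (hJ : ∀ x y : X, ∀ a b : ℝ, 0 ≤ a → 0 ≤ b → a + b = 1 →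
      J (a • x + b • y) ≤ (a : WithTop ℝ) * J x + (b : WithTop ℝ) * J y) :
    Convex ℝ (epigraph J) := by
  rintro ⟨x, w⟩ hx ⟨y, v⟩ hy a b ha hb hab
  obtain ⟨w', hw', hww'⟩ := exists_coe_eq_of_le_coe hx
  obtain ⟨v', hv', hvv'⟩ := exists_coe_eq_of_le_coe hy
  refine (hJ x y a b ha hb hab).trans ?_
  rw [hw', hv']
  change ((a * w' + b * v' : ℝ) : WithTop ℝ) ≤ ((a * w + b * v : ℝ) : WithTop ℝ)
  exact_mod_cast (by gcongr : a * w' + b * v' ≤ a * w + b * v)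

lemma mk_mem_epigraph (hw : J p = w) : (p, w) ∈ epigraph J := hw.le

lemma coe_add_coe_le_coe_add_iff {c d : ℝ} {e : WithTop ℝ} :
    (c : WithTop ℝ) + (w : ℝ) ≤ d + e ↔ ∀ v : ℝ, e ≤ v → c + w ≤ d + v := by
  induction e with
  | top => simp
  | coe u =>
    norm_cast
    exact ⟨fun h v huv => h.trans (by gcongr), fun h => h u le_rfl⟩

lemma isLocalMinOn_halfSqObjective [TopologicalSpace X] [NormedAddCommGroup Y] (hw : J x = w)
    (hmin : ∀ᶠ z in 𝓝 x, ((2⁻¹ * ‖G x‖ ^ 2 : ℝ) : WithTop ℝ) + J x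
      ≤ ((2⁻¹ * ‖G z‖ ^ 2 : ℝ) : WithTop ℝ) + J z) :
    IsLocalMinOn (halfSqObjective G) (epigraph J) (x, w) := by
  simp only [hw, coe_add_coe_le_coe_add_iff] at hmin
  filter_upwards [self_mem_nhdsWithin, nhdsWithin_le_nhds
    ((continuous_fst.tendsto (x, w)).eventually hmin)] with y hy hmin_y using hmin_y y.2 hy

variable [NormedAddCommGroup X] [NormedSpace ℝ X] [NormedAddCommGroup Y]

section GaussNewtonStep

variable [NormedSpace ℝ Y]

/-- `p` is a proximal Gauss–Newton step from `x`, i.e. a minimizer of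
`z ↦ ½‖b + A (z - x)‖² + J z`; the paper takes `b = F x` and `A = F' x`. -/
def IsGaussNewtonStep (J : X → WithTop ℝ) (b : Y) (A : X →L[ℝ] Y) (x p : X) : Prop :=
  ∀ z : X, ((2⁻¹ * ‖b + A (p - x)‖ ^ 2 : ℝ) : WithTop ℝ) + J p
    ≤ ((2⁻¹ * ‖b + A (z - x)‖ ^ 2 : ℝ) : WithTop ℝ) + J z

variable {A : X →L[ℝ] Y} {b : Y} {z : X}

lemma isGaussNewtonStep_iff (hw : J p = w) :
    IsGaussNewtonStep J b A x p ↔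
      IsMinOn (halfSqObjective fun z => b + A (z - x)) (epigraph J) (p, w) := by
  simp only [IsGaussNewtonStep, hw, coe_add_coe_le_coe_add_iff]
  exact ⟨fun h y hy => h y.1 y.2 hy, fun h z v hz => h (show (z, v) ∈ epigraph J from hz)⟩

lemma IsGaussNewtonStep.exists_coe_eq (hp : IsGaussNewtonStep J b A x p) (hz : J z ≠ ⊤) :
    ∃ w : ℝ, J p = w := by
  obtain ⟨v, hv⟩ := WithTop.ne_top_iff_exists.1 hz
  have hfin : J p ≠ ⊤ := fun htop => by
    have hle := hp z
    rw [htop, ← hv, WithTop.add_top, top_le_iff] at hle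
    exact WithTop.coe_ne_top hle
  obtain ⟨w, hw⟩ := WithTop.ne_top_iff_exists.1 hfin
  exact ⟨w, hw.symm⟩

end GaussNewtonStep

variable [InnerProductSpace ℝ Y] {E : Set (X × ℝ)} {A A₀ : X →L[ℝ] Y} {b D : Y} {z p' a : X}
  {v : ℝ} {K : ℝ≥0}

/- Only directional derivatives of `G` exist, so the optimality condition is read off along the
segment from `(x, w)` to `(z, v)`, where the objective is differentiable at the left end point. -/
lemma le_add_inner_of_isLocalMinOn (hE : Convex ℝ E) (hx : (x, w) ∈ E) (hz : (z, v) ∈ E)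
    (hmin : IsLocalMinOn (halfSqObjective G) E (x, w)) (hG : HasLineDerivAt ℝ G D x (z - x)) :
    w ≤ v + inner ℝ (G x) D := by
  let γ : ℝ → X × ℝ := fun t => (x + t • (z - x), w + t * (v - w))
  have hγE : MapsTo γ (Icc 0 1) E := fun t ht =>
    hE.add_smul_sub_mem hx hz ht
  have hγ₀ : γ 0 = (x, w) := by simp [γ]
  have hγ : ContinuousWithinAt γ (Icc 0 1) 0 := by fun_prop
  have hmin_γ : IsLocalMinOn (halfSqObjective G ∘ γ) (Icc 0 1) 0 := by
    have hlim := hγ.tendsto_nhdsWithin hγE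
    rw [hγ₀] at hlim
    exact hlim.eventually hmin |>.mono fun t ht => by simpa only [Function.comp, hγ₀] using ht
  have hderiv : HasDerivAt (halfSqObjective G ∘ γ) (inner ℝ (G x) D + (v - w)) 0 := by
    have hsq := (HasDerivAt.norm_sq hG).const_mul (2⁻¹ : ℝ)
    have hlin := ((hasDerivAt_id (0 : ℝ)).mul_const (v - w)).const_add w
    simpa [halfSqObjective, γ, Function.comp_def] using hsq.fun_add hlin
  have hcone : (1 : ℝ) ∈ posTangentConeAt (Icc (0 : ℝ) 1) 0 :=
    mem_posTangentConeAt_of_segment_subset (by simp [segment_eq_Icc])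
  have hnonneg := hmin_γ.hasFDerivWithinAt_nonneg hderiv.hasFDerivAt.hasFDerivWithinAt hcone
  simp only [toSpanSingleton_apply, one_smul] at hnonneg
  linarith

lemma hasLineDerivAt_add_apply_sub (A : X →L[ℝ] Y) (b : Y) (x p v : X) :
    HasLineDerivAt ℝ (fun z => b + A (z - x)) (A v) p v :=
  (((A.hasFDerivAt.comp p ((hasFDerivAt_id p).sub_const x)).const_add b).hasLineDerivAt v)

/- The parallelogram law in `Y`; it makes the objective uniformly convex in its first argument. -/
lemma halfSqObjective_midpoint (A : X →L[ℝ] Y) (b : Y) (x : X) (y y' : X × ℝ) :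
    halfSqObjective (fun z => b + A (z - x)) (midpoint ℝ y y')
        + 8⁻¹ * ‖A (y.1 - y'.1)‖ ^ 2
      = 2⁻¹ * (halfSqObjective (fun z => b + A (z - x)) y
        + halfSqObjective (fun z => b + A (z - x)) y') := by
  have hmid : b + A ((midpoint ℝ y y').1 - x)
      = (2⁻¹ : ℝ) • ((b + A (y.1 - x)) + (b + A (y'.1 - x))) := by
    simp only [midpoint_eq_smul_add, Prod.smul_fst, Prod.fst_add, map_sub, map_smul, map_add,
      invOf_eq_inv]
    module
  have hdiff : A (y.1 - y'.1) = (b + A (y.1 - x)) - (b + A (y'.1 - x)) := by simp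
  have hsnd : (midpoint ℝ y y').2 = 2⁻¹ * (y.2 + y'.2) := by
    simp [midpoint_eq_smul_add, mul_add]
  have hpar := parallelogram_law_with_norm ℝ (b + A (y.1 - x)) (b + A (y'.1 - x))
  simp only [halfSqObjective]
  rw [hmid, hdiff, hsnd, norm_smul, Real.norm_of_nonneg (by norm_num)]
  linear_combination 8⁻¹ * hpar

lemma norm_apply_sub_sq_le (hE : Convex ℝ E) {y y' : X × ℝ} (hy : y ∈ E) (hy' : y' ∈ E) {m : ℝ}
    (hm : ∀ e ∈ E, m ≤ halfSqObjective (fun z => b + A (z - x)) e) :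
    ‖A (y.1 - y'.1)‖ ^ 2 ≤ 4 * (halfSqObjective (fun z => b + A (z - x)) y - m
      + (halfSqObjective (fun z => b + A (z - x)) y' - m)) := by
  have hmid := halfSqObjective_midpoint A b x y y'
  have hle := hm _ (hE.midpoint_mem hy hy')
  linarith

lemma bddBelow_halfSqObjective {M c : ℝ} (hM : 0 ≤ M) (hA : AntilipschitzWith K A)
    (hE : ∀ y ∈ E, c - M * ‖y.1 - a‖ ≤ y.2) :
    BddBelow (halfSqObjective (fun z => b + A (z - x)) '' E) := by
  refine ⟨c - M * K * ‖b + A (a - x)‖ - (M * K) ^ 2 / 2, ?_⟩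
  rintro _ ⟨y, hy, rfl⟩
  have hnorm : ‖y.1 - a‖ ≤ K * (‖b + A (y.1 - x)‖ + ‖b + A (a - x)‖) := by
    refine (ZeroHomClass.bound_of_antilipschitz A hA _).trans ?_
    gcongr
    have hdiff : A (y.1 - a) = (b + A (y.1 - x)) - (b + A (a - x)) := by simp
    rw [hdiff]
    exact norm_sub_le _ _
  have hlower := hE y hy
  have hscaled := mul_le_mul_of_nonneg_left hnorm hM
  simp only [halfSqObjective]
  linarith [sq_nonneg (‖b + A (y.1 - x)‖ - M * K)]

/- The direct method: a minimizing sequence is Cauchy by uniform convexity, and the convergence of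
its first components and of the objective forces that of its second components. -/
lemma exists_isMinOn_halfSqObjective [CompleteSpace X] (hE : Convex ℝ E) (hclosed : IsClosed E)
    (hne : E.Nonempty) (hA : AntilipschitzWith K A)
    (hbdd : BddBelow (halfSqObjective (fun z => b + A (z - x)) '' E)) :
    ∃ y ∈ E, IsMinOn (halfSqObjective fun z => b + A (z - x)) E y := by
  set Φ : X × ℝ → ℝ := halfSqObjective fun z => b + A (z - x)
  set m := sInf (Φ '' E)
  have hm (y) (hy : y ∈ E) : m ≤ Φ y := csInf_le hbdd (mem_image_of_mem Φ hy)
  obtain ⟨u, hu_anti, hu_lim, hu_mem⟩ := exists_seq_tendsto_sInf (hne.image Φ) hbdd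
  choose y hyE hyu using hu_mem
  have hdist (i j n : ℕ) (hi : n ≤ i) (hj : n ≤ j) :
      dist (y i).1 (y j).1 ≤ K * √(8 * (u n - m)) := by
    rw [dist_eq_norm]
    refine (ZeroHomClass.bound_of_antilipschitz A hA _).trans ?_
    gcongr
    refine Real.le_sqrt_of_sq_le ((norm_apply_sub_sq_le hE (hyE i) (hyE j) hm).trans ?_)
    change 4 * (Φ (y i) - m + (Φ (y j) - m)) ≤ _
    linarith [hyu i, hyu j, hu_anti hi, hu_anti hj]
  have hcauchy : CauchySeq fun n => (y n).1 :=
    cauchySeq_of_le_tendsto_0 _ hdist (by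
      simpa [m] using (((hu_lim.sub_const m).const_mul 8).sqrt).const_mul (K : ℝ))
  obtain ⟨p, hp⟩ := cauchySeq_tendsto_of_complete hcauchy
  have hres : Tendsto (fun n => 2⁻¹ * ‖b + A ((y n).1 - x)‖ ^ 2) atTop
      (𝓝 (2⁻¹ * ‖b + A (p - x)‖ ^ 2)) :=
    (by fun_prop : Continuous fun z => 2⁻¹ * ‖b + A (z - x)‖ ^ 2).tendsto p |>.comp hp
  have hsnd : Tendsto (fun n => (y n).2) atTop (𝓝 (m - 2⁻¹ * ‖b + A (p - x)‖ ^ 2)) :=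
    (hu_lim.sub hres).congr fun n => by simp [← hyu, Φ, halfSqObjective]
  refine ⟨_, hclosed.mem_of_tendsto (hp.prodMk_nhds hsnd) (.of_forall hyE), fun e he => ?_⟩
  simpa [Φ, halfSqObjective] using hm e he

lemma exists_isGaussNewtonStep [CompleteSpace X] (hE : Convex ℝ (epigraph J))
    (hclosed : IsClosed (epigraph J)) (hne : (epigraph J).Nonempty) (hA : AntilipschitzWith K A)
    (hbdd : BddBelow (halfSqObjective (fun z => b + A (z - x)) '' epigraph J)) :
    ∃ p, IsGaussNewtonStep J b A x p := by
  obtain ⟨⟨p, v⟩, hpv, hmin⟩ := exists_isMinOn_halfSqObjective hE hclosed hne hA hbdd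
  obtain ⟨w, hw, hwv⟩ := exists_coe_eq_of_le_coe hpv
  refine ⟨p, (isGaussNewtonStep_iff hw).2 fun y hy => ?_⟩
  have hle : halfSqObjective (fun z => b + A (z - x)) (p, w)
      ≤ halfSqObjective (fun z => b + A (z - x)) (p, v) := by
    simpa [halfSqObjective] using hwv
  exact hle.trans (hmin hy)

lemma IsGaussNewtonStep.eq (hE : Convex ℝ (epigraph J)) (hA : AntilipschitzWith K A)
    (hz : J z ≠ ⊤) (hp : IsGaussNewtonStep J b A x p) (hp' : IsGaussNewtonStep J b A x p') :
    p' = p := by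
  obtain ⟨w, hw⟩ := hp.exists_coe_eq hz
  obtain ⟨w', hw'⟩ := hp'.exists_coe_eq hz
  have hmin := (isGaussNewtonStep_iff hw).1 hp
  have hmin' := (isGaussNewtonStep_iff hw').1 hp'
  have hsq := norm_apply_sub_sq_le hE (mk_mem_epigraph hw') (mk_mem_epigraph hw) fun y hy => hmin hy
  have hle := hmin' (mk_mem_epigraph hw)
  have hzero : A (p' - p) = 0 := by
    rw [← norm_eq_zero, ← sq_eq_zero_iff]
    refine le_antisymm (hsq.trans ?_) (sq_nonneg _)
    change halfSqObjective _ (p', w') ≤ halfSqObjective _ (p, w) at hle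
    linarith
  exact hA.injective (sub_eq_zero.1 (by rwa [map_sub] at hzero))

lemma norm_le_of_inner_le {ε : Y} {d : X} (hA : AntilipschitzWith K A)
    (h : inner ℝ (b + ε + A d) (A d) ≤ inner ℝ b (A₀ d)) :
    ‖d‖ ≤ K * (K * (‖b‖ * ‖A - A₀‖) + ‖ε‖) := by
  have hd : ‖d‖ ≤ K * ‖A d‖ := ZeroHomClass.bound_of_antilipschitz A hA d
  have hsq : ‖A d‖ ^ 2 ≤ -inner ℝ b ((A - A₀) d) - inner ℝ ε (A d) := by
    rw [inner_add_left, inner_add_left, real_inner_self_eq_norm_sq] at h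
    rw [sub_apply, inner_sub_right]
    linarith
  have hb : -inner ℝ b ((A - A₀) d) ≤ ‖b‖ * (‖A - A₀‖ * (K * ‖A d‖)) :=
    calc -inner ℝ b ((A - A₀) d) ≤ ‖b‖ * ‖(A - A₀) d‖ :=
          neg_le.1 (neg_le_of_abs_le (abs_real_inner_le_norm _ _))
      _ ≤ ‖b‖ * (‖A - A₀‖ * (K * ‖A d‖)) := by
          gcongr
          exact (A - A₀).le_opNorm_of_le hd
  have hε : -inner ℝ ε (A d) ≤ ‖ε‖ * ‖A d‖ :=
    neg_le.1 (neg_le_of_abs_le (abs_real_inner_le_norm _ _))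
  have hAd : ‖A d‖ ≤ K * (‖b‖ * ‖A - A₀‖) + ‖ε‖ := by
    rcases (norm_nonneg (A d)).eq_or_lt with hzero | hpos
    · rw [← hzero]
      positivity
    · refine le_of_mul_le_mul_right ?_ hpos
      linarith
  exact hd.trans (mul_le_mul_of_nonneg_left hAd K.2)

lemma existsUnique_isGaussNewtonStep [CompleteSpace X] {xs : X} (hE : Convex ℝ (epigraph J))
    (hclosed : IsClosed (epigraph J)) (hxs : J xs = w)
    (hmin : IsLocalMinOn (halfSqObjective G) (epigraph J) (xs, w))
    (hG : ∀ v, HasLineDerivAt ℝ G (A₀ v) xs v) (hA : AntilipschitzWith K A) :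
    ∃! p, IsGaussNewtonStep J b A x p := by
  have hbelow : ∀ y ∈ epigraph J, w - ‖G xs‖ * ‖A₀‖ * ‖y.1 - xs‖ ≤ y.2 := by
    intro y hy
    have hopt := le_add_inner_of_isLocalMinOn hE (mk_mem_epigraph hxs) hy hmin (hG (y.1 - xs))
    have hinner : inner ℝ (G xs) (A₀ (y.1 - xs)) ≤ ‖G xs‖ * ‖A₀‖ * ‖y.1 - xs‖ := by
      rw [mul_assoc]
      exact (real_inner_le_norm _ _).trans (by gcongr; exact le_opNorm _ _)
    linarith
  obtain ⟨p, hp⟩ := exists_isGaussNewtonStep hE hclosed ⟨_, mk_mem_epigraph hxs⟩ hA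
    (bddBelow_halfSqObjective (by positivity) hA hbelow)
  exact ⟨p, hp, fun p' hp' => hp.eq hE hA (hxs ▸ WithTop.coe_ne_top) hp'⟩

lemma norm_gaussNewtonStep_sub_le {F : X → Y} {F' : X → X →L[ℝ] Y} {xs : X}
    (hE : Convex ℝ (epigraph J)) (hxs : J xs = w)
    (hmin : IsLocalMinOn (halfSqObjective F) (epigraph J) (xs, w))
    (hF : ∀ v, HasLineDerivAt ℝ F (F' xs v) xs v) (hA : AntilipschitzWith K (F' x))
    (hp : IsGaussNewtonStep J (F x) (F' x) x p) :
    ‖p - xs‖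
      ≤ K * (K * (‖F xs‖ * ‖F' x - F' xs‖) + ‖F x - F xs - F' x (x - xs)‖) := by
  obtain ⟨wp, hwp⟩ := hp.exists_coe_eq (hxs ▸ WithTop.coe_ne_top)
  have hopt_xs : w ≤ wp + inner ℝ (F xs) (F' xs (p - xs)) :=
    le_add_inner_of_isLocalMinOn hE (mk_mem_epigraph hxs) (mk_mem_epigraph hwp) hmin (hF _)
  have hopt_p : wp ≤ w + inner ℝ (F x + F' x (p - x)) (F' x (xs - p)) :=
    le_add_inner_of_isLocalMinOn (G := fun z => F x + F' x (z - x)) hE (mk_mem_epigraph hwp)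
      (mk_mem_epigraph hxs) ((isGaussNewtonStep_iff hwp).1 hp).localize
      (hasLineDerivAt_add_apply_sub _ _ _ _ _)
  refine norm_le_of_inner_le hA ?_
  have hres : F xs + (F x - F xs - F' x (x - xs)) + F' x (p - xs) = F x + F' x (p - x) := by
    simp only [map_sub]
    abel
  rw [← neg_sub p xs, map_neg, inner_neg_right] at hopt_p
  rw [hres]
  linarith

end CompositeMinimization

section Rate

/-- The factor `q` of the one-step estimate as a function of `g = γ₀ r`, `c = γᶜ r` and `r`. -/
noncomputable def gaussNewtonRate (α β κ g c r : ℝ) : ℝ :=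
  β / (1 - β * g * r) *
    ((β * g * c * r ^ 2 + κ * c * r) / (1 - β * g * r)
      + (1 + √2) * α * β ^ 2 * g ^ 2 * r / (1 - β * g * r)
      + ((1 + √2) * κ + 1) * α * β * g / (1 - β * g * r))

/-- The radius `R̄`: the supremum of the radii below `R` on which `β γ₀(r) r < 1`, which is where
the perturbation bound keeps `F' x` injective. -/
noncomputable def contractionRadius (L : ℝ → ℝ) (β : ℝ) (R : ℝ≥0∞) : ℝ≥0∞ :=
  sSup {ρ | 0 < ρ ∧ ρ < R ∧ lipschitzMean L ρ.toReal * ρ.toReal < 1 / β}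

variable {α β κ g g' c c' r r' : ℝ} {L : ℝ → ℝ} {R : ℝ≥0∞}

lemma le_gaussNewtonRate (hα : 0 ≤ α) (hβ : 0 ≤ β) (hκ : 1 ≤ κ) (hg : 0 ≤ g) (hc : 0 ≤ c)
    (hr : 0 ≤ r) (hlt : β * g * r < 1) :
    β / (1 - β * g * r) * (β / (1 - β * g * r) * (α * g) + c * r)
      ≤ gaussNewtonRate α β κ g c r := by
  have hden : 0 < 1 - β * g * r := sub_pos.2 hlt
  have hremainder : c * r ≤ (β * g * c * r ^ 2 + κ * c * r) / (1 - β * g * r) := by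
    rw [le_div_iff₀ hden]
    calc c * r * (1 - β * g * r) ≤ 1 * c * r := by
          linarith [(by positivity : 0 ≤ c * r * (β * g * r))]
      _ ≤ κ * c * r := by gcongr
      _ ≤ β * g * c * r ^ 2 + κ * c * r := le_add_of_nonneg_left (by positivity)
  have hresidual : β / (1 - β * g * r) * (α * g)
      ≤ ((1 + √2) * κ + 1) * α * β * g / (1 - β * g * r) := by
    rw [div_mul_eq_mul_div, div_le_div_iff_of_pos_right hden]
    calc β * (α * g) = 1 * α * β * g := by ring
      _ ≤ ((1 + √2) * κ + 1) * α * β * g := by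
        gcongr
        exact le_add_of_nonneg_left (by positivity)
  have hcross : 0 ≤ (1 + √2) * α * β ^ 2 * g ^ 2 * r / (1 - β * g * r) := by positivity
  exact mul_le_mul_of_nonneg_left (by linarith) (by positivity)

lemma gaussNewtonRate_lt (hα : 0 ≤ α) (hβ : 0 < β) (hκ : 0 ≤ κ) (hg : 0 < g) (hgg' : g ≤ g')
    (hc : 0 < c) (hcc' : c ≤ c') (hr : 0 ≤ r) (hrr' : r < r') (hlt : β * g' * r' < 1) :
    gaussNewtonRate α β κ g c r < gaussNewtonRate α β κ g' c' r' := by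
  have hg' : 0 < g' := hg.trans_le hgg'
  have hc' : 0 < c' := hc.trans_le hcc'
  have hr' : 0 < r' := hr.trans_lt hrr'
  have hden : 0 < 1 - β * g' * r' := sub_pos.2 hlt
  have hden_le : 1 - β * g' * r' ≤ 1 - β * g * r := by gcongr
  have hden' : 0 < 1 - β * g * r := hden.trans_le hden_le
  have hremainder : (β * g * c * r ^ 2 + κ * c * r) / (1 - β * g * r)
      < (β * g' * c' * r' ^ 2 + κ * c' * r') / (1 - β * g' * r') := by
    refine div_lt_div₀ (add_lt_add_of_lt_of_le ?_ (by gcongr)) hden_le (by positivity) hden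
    calc β * g * c * r ^ 2 < β * g * c * r' ^ 2 := by gcongr
      _ ≤ β * g' * c' * r' ^ 2 := by gcongr
  have hcross : (1 + √2) * α * β ^ 2 * g ^ 2 * r / (1 - β * g * r)
      ≤ (1 + √2) * α * β ^ 2 * g' ^ 2 * r' / (1 - β * g' * r') := by gcongr
  have hresidual : ((1 + √2) * κ + 1) * α * β * g / (1 - β * g * r)
      ≤ ((1 + √2) * κ + 1) * α * β * g' / (1 - β * g' * r') := by gcongr
  exact mul_lt_mul_of_le_of_lt_of_pos_of_nonneg (by gcongr) (by linarith) (by positivity)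
    (by positivity)

lemma exists_le_of_mem_radii_contractionRadius (hr : r ∈ radii (contractionRadius L β R)) :
    ∃ ρ ∈ radii R, r ≤ ρ ∧ lipschitzMean L ρ * ρ < 1 / β := by
  obtain ⟨ρ, ⟨-, hρR, hρ⟩, hrρ⟩ := lt_sSup_iff.1 hr.2
  refine ⟨ρ.toReal, ⟨ENNReal.toReal_nonneg, ?_⟩, ?_, hρ⟩
  · rwa [ENNReal.ofReal_toReal hρR.ne_top]
  · exact (ENNReal.ofReal_le_iff_le_toReal hρR.ne_top).1 hrρ.le

lemma radii_contractionRadius_subset : radii (contractionRadius L β R) ⊆ radii R := by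
  intro r hr
  obtain ⟨ρ, hρ, hrρ, -⟩ := exists_le_of_mem_radii_contractionRadius hr
  exact mem_radii_of_le hρ hr.1 hrρ

section Radii

variable (hL : ContinuousOn L (radii R)) (hL₀ : 0 < L 0) (hmono : MonotoneOn L (radii R))
include hL hL₀ hmono

lemma pos_of_mem_radii_contractionRadius (hr : r ∈ radii (contractionRadius L β R)) : 0 < β := by
  obtain ⟨ρ, hρ, -, hlt⟩ := exists_le_of_mem_radii_contractionRadius hr
  have hmean_pos := lipschitzMean_pos (starConvex_radii R) hL hmono hL₀ hρ hρ.1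
  exact one_div_pos.1 ((mul_nonneg hmean_pos.le hρ.1).trans_lt hlt)

lemma mul_lipschitzMean_mul_lt_one (hr : r ∈ radii (contractionRadius L β R)) :
    β * lipschitzMean L r * r < 1 := by
  obtain ⟨ρ, hρ, hrρ, hlt⟩ := exists_le_of_mem_radii_contractionRadius hr
  have hstar := starConvex_radii R
  have hmean_le : lipschitzMean L r * r ≤ lipschitzMean L ρ * ρ :=
    mul_le_mul (monotoneOn_lipschitzMean hstar hL hmono (mem_radii_of_le hρ hr.1 hrρ) hρ hrρ) hrρ
      hr.1 (lipschitzMean_pos hstar hL hmono hL₀ hρ hρ.1).le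
  rw [mul_assoc, ← lt_div_iff₀' (pos_of_mem_radii_contractionRadius hL hL₀ hmono hr)]
  exact hmean_le.trans_lt hlt

lemma continuousOn_gaussNewtonRate :
    ContinuousOn (fun r => gaussNewtonRate α β κ (lipschitzMean L r) (taylorMean L r) r)
      (radii (contractionRadius L β R)) := by
  have hg := (continuousOn_lipschitzMean (starConvex_radii R) hL).mono
    (radii_contractionRadius_subset (L := L) (β := β))
  have hc := (continuousOn_taylorMean (starConvex_radii R) hL).mono
    (radii_contractionRadius_subset (L := L) (β := β))
  have hden : ∀ r ∈ radii (contractionRadius L β R), 1 - β * lipschitzMean L r * r ≠ 0 :=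
    fun r hr => (sub_pos.2 (mul_lipschitzMean_mul_lt_one hL hL₀ hmono hr)).ne'
  unfold gaussNewtonRate
  fun_prop (disch := assumption)

lemma strictMonoOn_gaussNewtonRate (hα : 0 ≤ α) (hκ : 0 ≤ κ) :
    StrictMonoOn (fun r => gaussNewtonRate α β κ (lipschitzMean L r) (taylorMean L r) r)
      (radii (contractionRadius L β R)) := by
  intro r hr r' hr' hrr'
  have hr_mem := radii_contractionRadius_subset hr
  have hr'_mem := radii_contractionRadius_subset hr'
  have hstar := starConvex_radii R
  exact gaussNewtonRate_lt hα (pos_of_mem_radii_contractionRadius hL hL₀ hmono hr') hκ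
    (lipschitzMean_pos hstar hL hmono hL₀ hr_mem hr.1)
    (monotoneOn_lipschitzMean hstar hL hmono hr_mem hr'_mem hrr'.le)
    (taylorMean_pos hstar hL hmono hL₀ hr_mem hr.1)
    (monotoneOn_taylorMean hstar hL hmono hr_mem hr'_mem hrr'.le) hr.1 hrr'
    (mul_lipschitzMean_mul_lt_one hL hL₀ hmono hr')

end Radii

end Rate

section GaussNewton

variable {X Y : Type*} [NormedAddCommGroup X] [NormedSpace ℝ X] [NormedAddCommGroup Y]

lemma antilipschitzWith_of_opNorm_sub_le [NormedSpace ℝ Y] {A B : X →L[ℝ] Y} {K : ℝ≥0} {δ : ℝ}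
    (hA : AntilipschitzWith K A) (hδ : ‖B - A‖ ≤ δ) (hlt : K * δ < 1) :
    AntilipschitzWith (K / (1 - K * δ)).toNNReal B := by
  have hden : 0 < 1 - K * δ := sub_pos.2 hlt
  refine B.antilipschitz_of_bound fun v => ?_
  have hv : ‖v‖ ≤ K * (‖B v‖ + δ * ‖v‖) :=
    calc ‖v‖ ≤ K * ‖A v‖ := ZeroHomClass.bound_of_antilipschitz A hA v
      _ = K * ‖B v - (B - A) v‖ := by simp
      _ ≤ K * (‖B v‖ + δ * ‖v‖) := by
        gcongr
        exact (norm_sub_le _ _).trans (by gcongr; exact le_of_opNorm_le _ hδ v)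
  rw [Real.coe_toNNReal _ (by positivity), div_mul_eq_mul_div, le_div_iff₀ hden]
  linarith

lemma one_le_mul_opNorm [NormedSpace ℝ Y] {A : X →L[ℝ] Y} {K : ℝ≥0} (hA : AntilipschitzWith K A)
    {v : X} (hv : v ≠ 0) : 1 ≤ K * ‖A‖ := by
  refine le_of_mul_le_mul_right ?_ (norm_pos_iff.2 hv)
  calc 1 * ‖v‖ ≤ K * ‖A v‖ := by simpa using ZeroHomClass.bound_of_antilipschitz A hA v
    _ ≤ K * ‖A‖ * ‖v‖ := by
      rw [mul_assoc]
      gcongr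
      exact A.le_opNorm v

variable [InnerProductSpace ℝ Y] {F : X → Y} {F' : X → X →L[ℝ] Y} {J : X → WithTop ℝ} {U : Set X}
  {xs x p : X} {w : ℝ} {β : ℝ≥0} {L : ℝ → ℝ} {R : ℝ≥0∞}

section ContractionEstimate

variable (hU : StarConvex ℝ xs U) (hxU : x ∈ U) (hL₀ : 0 < L 0) (hLcont : ContinuousOn L (radii R))
  (hLmono : MonotoneOn L (radii R)) (hcen : ∀ y ∈ U, ‖F' y - F' xs‖ ≤ ∫ u in (0 : ℝ)..‖y - xs‖, L u)
  (hβ : AntilipschitzWith β (F' xs)) (hxr : ‖x - xs‖ ∈ radii (contractionRadius L β R))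
include hxU hL₀ hLcont hLmono hcen hβ hxr

lemma antilipschitzWith_of_mem_contractionRadius :
    AntilipschitzWith (β / (1 - β * lipschitzMean L ‖x - xs‖ * ‖x - xs‖)).toNNReal (F' x) := by
  have hlt := mul_lipschitzMean_mul_lt_one hLcont hL₀ hLmono hxr
  rw [mul_assoc] at hlt ⊢
  exact antilipschitzWith_of_opNorm_sub_le hβ
    ((hcen x hxU).trans_eq (lipschitzMean_mul_self L _).symm) hlt

include hU in
lemma norm_gaussNewtonStep_sub_le_gaussNewtonRate
    (hF : ∀ y ∈ U, ∀ v, HasLineDerivAt ℝ F (F' y v) y v) (hxs : J xs = w)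
    (hE : Convex ℝ (epigraph J))
    (hmin : IsLocalMinOn (halfSqObjective F) (epigraph J) (xs, w))
    (hp : IsGaussNewtonStep J (F x) (F' x) x p) :
    ‖p - xs‖ ≤ gaussNewtonRate ‖F xs‖ β (β * ‖F' xs‖) (lipschitzMean L ‖x - xs‖)
      (taylorMean L ‖x - xs‖) ‖x - xs‖ * ‖x - xs‖ := by
  have hlt := mul_lipschitzMean_mul_lt_one hLcont hL₀ hLmono hxr
  have hanti := antilipschitzWith_of_mem_contractionRadius hxU hL₀ hLcont hLmono hcen hβ hxr
  have hxR := radii_contractionRadius_subset hxr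
  have hslope : ‖F' x - F' xs‖ ≤ lipschitzMean L ‖x - xs‖ * ‖x - xs‖ :=
    (hcen x hxU).trans_eq (lipschitzMean_mul_self L _).symm
  have hremainder : ‖F x - F xs - F' x (x - xs)‖ ≤ taylorMean L ‖x - xs‖ * ‖x - xs‖ ^ 2 :=
    norm_sub_sub_le_taylorMean hU hxU hF (hLcont.mono (Icc_subset_radii hxR)) hcen
  have hstep := norm_gaussNewtonStep_sub_le hE hxs hmin (hF xs (hU.mem ⟨x, hxU⟩)) hanti hp
  set g := lipschitzMean L ‖x - xs‖
  set c := taylorMean L ‖x - xs‖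
  set K := (β / (1 - β * g * ‖x - xs‖) : ℝ)
  have hK : 0 ≤ K := div_nonneg β.2 (sub_pos.2 hlt).le
  rw [Real.coe_toNNReal K hK] at hstep
  have hle : ‖p - xs‖ ≤ K * (K * (‖F xs‖ * g) + c * ‖x - xs‖) * ‖x - xs‖ :=
    calc ‖p - xs‖ ≤ K * (K * (‖F xs‖ * (g * ‖x - xs‖)) + c * ‖x - xs‖ ^ 2) :=
          hstep.trans (by gcongr)
      _ = K * (K * (‖F xs‖ * g) + c * ‖x - xs‖) * ‖x - xs‖ := by ring
  rcases eq_or_ne x xs with rfl | hne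
  · simpa using hle
  · refine hle.trans (mul_le_mul_of_nonneg_right ?_ (norm_nonneg _))
    exact le_gaussNewtonRate (norm_nonneg _) β.2 (one_le_mul_opNorm hβ (sub_ne_zero.2 hne))
      (lipschitzMean_pos (starConvex_radii R) hLcont hLmono hL₀ hxR hxR.1).le
      (taylorMean_pos (starConvex_radii R) hLcont hLmono hL₀ hxR hxR.1).le hxR.1 hlt

end ContractionEstimate

theorem stmt_14_general [CompleteSpace X] (hF : ∀ x ∈ U, ∀ v, HasLineDerivAt ℝ F (F' x v) x v)
    (hconv : ∀ x y : X, ∀ a b : ℝ, 0 ≤ a → 0 ≤ b → a + b = 1 →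
      J (a • x + b • y) ≤ (a : WithTop ℝ) * J x + (b : WithTop ℝ) * J y)
    (hlsc : LowerSemicontinuous J) (hxsU : xs ∈ U) (hU : StarConvex ℝ xs U) (hxsJ : J xs ≠ ⊤)
    (hmin : ∀ᶠ x in 𝓝 xs, ((2⁻¹ * ‖F xs‖ ^ 2 : ℝ) : WithTop ℝ) + J xs
      ≤ ((2⁻¹ * ‖F x‖ ^ 2 : ℝ) : WithTop ℝ) + J x)
    (hβ : AntilipschitzWith β (F' xs)) (hLcont : ContinuousOn L (radii R)) (hL₀ : 0 < L 0)
    (hLmono : MonotoneOn L (radii R))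
    (hcen : ∀ x ∈ U, ‖F' x - F' xs‖ ≤ ∫ u in (0 : ℝ)..‖x - xs‖, L u) :
    let q r := gaussNewtonRate ‖F xs‖ β (β * ‖F' xs‖) (lipschitzMean L r) (taylorMean L r) r
    (∀ x ∈ U, ‖x - xs‖ ∈ radii (contractionRadius L β R) →
      Function.Injective (F' x) ∧ IsClosed (range (F' x)) ∧
      ∃ p, IsGaussNewtonStep J (F x) (F' x) x p ∧
        (∀ p', IsGaussNewtonStep J (F x) (F' x) x p' → p' = p) ∧
        ‖p - xs‖ ≤ q ‖x - xs‖ * ‖x - xs‖) ∧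
    ContinuousOn q (radii (contractionRadius L β R)) ∧
    StrictMonoOn q (radii (contractionRadius L β R)) := by
  obtain ⟨w, hw⟩ := WithTop.ne_top_iff_exists.1 hxsJ
  have hE := convex_epigraph hconv
  have hmin_epi := isLocalMinOn_halfSqObjective hw.symm hmin
  refine ⟨fun x hxU hxr => ?_, continuousOn_gaussNewtonRate hLcont hL₀ hLmono,
    strictMonoOn_gaussNewtonRate hLcont hL₀ hLmono (norm_nonneg _) (by positivity)⟩
  have hanti := antilipschitzWith_of_mem_contractionRadius hxU hL₀ hLcont hLmono hcen hβ hxr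
  obtain ⟨p, hp, huniq⟩ := existsUnique_isGaussNewtonStep (b := F x) (x := x) hE
    (isClosed_epigraph hlsc) hw.symm hmin_epi (hF xs hxsU) hanti
  exact ⟨hanti.injective, hanti.isClosed_range (F' x).uniformContinuous, p, hp, huniq,
    norm_gaussNewtonStep_sub_le_gaussNewtonRate hU hxU hL₀ hLcont hLmono hcen hβ hxr hF hw.symm hE
      hmin_epi hp⟩

end GaussNewton

end

/-- One-step contraction estimate for the proximal Gauss–Newton operator
(Proposition on the map `G̃`): under the standing hypotheses (F Gâteaux differentiable,
J proper convex lsc, x* a local minimizer of `Φ₀ = ½‖F·‖² + J` with `F′(x*)` injective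
with closed range, `F′` center Lipschitz of center `x*` with continuous positive
increasing average `L` on the open star-shaped set `U`), with `α = ‖F(x*)‖`,
`β = ‖F′(x*)†‖`, `κ = β‖F′(x*)‖`, `R̄ = sup{r ∈ (0,R) : γ₀(r)r < 1/β}`: for every
`0 < r ≤ R̄` with `B_r(x*) ⊆ U` and every `x ∈ B_r(x*)`, the map `F′(x)` is injective
with closed range and the unique minimizer `p` of `z ↦ ½‖F(x) + F′(x)(z − x)‖² + J(z)`
satisfies `‖p − x*‖ ≤ q(‖x − x*‖)‖x − x*‖`; moreover `q` is continuous and strictly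
increasing on `[0,R̄)`. -/
theorem stmt_14 {X Y : Type*} [NormedAddCommGroup X] [InnerProductSpace ℝ X] [CompleteSpace X]
    [NormedAddCommGroup Y] [InnerProductSpace ℝ Y] [CompleteSpace Y]
    (Ω U : Set X) (hΩopen : IsOpen Ω) (hΩne : Ω.Nonempty)
    (hUopen : IsOpen U) (hUΩ : U ⊆ Ω)
    (F : X → Y) (F' : X → (X →L[ℝ] Y))
    -- `F` is Gâteaux differentiable on `Ω` with derivative `F'`
    (hdiff : ∀ x ∈ Ω, ∀ v : X,
      Filter.Tendsto (fun t : ℝ => t⁻¹ • (F (x + t • v) - F x))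
        (nhdsWithin (0:ℝ) {(0:ℝ)}ᶜ) (nhds (F' x v)))
    -- `J` is proper, convex and lower semicontinuous
    (J : X → WithTop ℝ)
    (hproper : ∃ x, J x ≠ ⊤)
    (hconv : ∀ x y : X, ∀ a b : ℝ, 0 ≤ a → 0 ≤ b → a + b = 1 →
      J (a • x + b • y) ≤ (a : WithTop ℝ) * J x + (b : WithTop ℝ) * J y)
    (hlsc : LowerSemicontinuous J)
    -- `x* ∈ U` and `U` is star-shaped with respect to `x*`
    (xs : X) (hxsU : xs ∈ U)
    (hstar : ∀ x ∈ U, ∀ t ∈ Set.Icc (0:ℝ) 1, xs + t • (x - xs) ∈ U)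
    -- `x*` is a local minimizer of `Φ₀ = ½‖F·‖² + J` with `J(x*) < +∞`
    (hxsJ : J xs ≠ ⊤)
    (hmin : ∀ᶠ x in nhds xs,
      ((2⁻¹ * ‖F xs‖ ^ 2 : ℝ) : WithTop ℝ) + J xs
        ≤ ((2⁻¹ * ‖F x‖ ^ 2 : ℝ) : WithTop ℝ) + J x)
    -- `F′(x*)` is injective with closed range, `S = (F′(x*)*F′(x*))⁻¹`
    (hinj : Function.Injective (F' xs)) (hcl : IsClosed (Set.range (F' xs)))
    (S : X →L[ℝ] X)
    (hS1 : S ∘L (adjoint (F' xs) ∘L F' xs) = 1)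
    (hS2 : (adjoint (F' xs) ∘L F' xs) ∘L S = 1)
    -- `L : [0,R) → ℝ` is continuous, positive and increasing, `sup_{x∈U}‖x−x*‖ ≤ R`
    (R : ℝ≥0∞) (hR : 0 < R) (hsup : ∀ x ∈ U, (‖x - xs‖₊ : ℝ≥0∞) ≤ R)
    (L : ℝ → ℝ)
    (hLcont : ContinuousOn L {u : ℝ | 0 ≤ u ∧ ENNReal.ofReal u < R})
    (hLpos : ∀ u : ℝ, 0 ≤ u → ENNReal.ofReal u < R → 0 < L u)
    (hLmono : ∀ u v : ℝ, 0 ≤ u → u ≤ v → ENNReal.ofReal v < R → L u ≤ L v)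
    -- `F′` is center Lipschitz of center `x*` with `L` average on `U`
    (hcen : ∀ x ∈ U, ‖F' x - F' xs‖ ≤ ∫ u in (0:ℝ)..‖x - xs‖, L u)
    -- the constants `α`, `β`, `κ`
    (α β κ : ℝ)
    (hα : α = ‖F xs‖) (hβ : β = ‖S ∘L adjoint (F' xs)‖) (hκ : κ = β * ‖F' xs‖)
    -- the functions `γ₀`, `γ^c` and `q`, and the radius `R̄`
    (γ₀ γc : ℝ → ℝ)
    (hγ₀ : ∀ r : ℝ, γ₀ r = if r = 0 then L 0 else (∫ u in (0:ℝ)..r, L u) / r)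
    (hγc : ∀ r : ℝ, γc r = if r = 0 then 3 * L 0 / 2
        else (∫ u in (0:ℝ)..r, (2 * r - u) * L u) / r ^ 2)
    (Rb : ℝ≥0∞)
    (hRb : Rb = sSup {ρ : ℝ≥0∞ | 0 < ρ ∧ ρ < R ∧ γ₀ ρ.toReal * ρ.toReal < 1 / β})
    (q : ℝ → ℝ)
    (hq : ∀ r : ℝ, q r = β / (1 - β * γ₀ r * r) *
        ((β * γ₀ r * γc r * r ^ 2 + κ * γc r * r) / (1 - β * γ₀ r * r)
          + (1 + Real.sqrt 2) * α * β ^ 2 * γ₀ r ^ 2 * r / (1 - β * γ₀ r * r)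
          + ((1 + Real.sqrt 2) * κ + 1) * α * β * γ₀ r / (1 - β * γ₀ r * r))) :
    (∀ r : ℝ, 0 < r → ENNReal.ofReal r ≤ Rb → Metric.ball xs r ⊆ U →
      ∀ x ∈ Metric.ball xs r,
        Function.Injective (F' x) ∧ IsClosed (Set.range (F' x)) ∧
        ∃ p : X,
          (∀ z : X,
            ((2⁻¹ * ‖F x + (F' x) (p - x)‖ ^ 2 : ℝ) : WithTop ℝ) + J p
              ≤ ((2⁻¹ * ‖F x + (F' x) (z - x)‖ ^ 2 : ℝ) : WithTop ℝ) + J z) ∧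
          (∀ p' : X,
            (∀ z : X,
              ((2⁻¹ * ‖F x + (F' x) (p' - x)‖ ^ 2 : ℝ) : WithTop ℝ) + J p'
                ≤ ((2⁻¹ * ‖F x + (F' x) (z - x)‖ ^ 2 : ℝ) : WithTop ℝ) + J z) →
            p' = p) ∧
          ‖p - xs‖ ≤ q ‖x - xs‖ * ‖x - xs‖) ∧
    ContinuousOn q {u : ℝ | 0 ≤ u ∧ ENNReal.ofReal u < Rb} ∧
    StrictMonoOn q {u : ℝ | 0 ≤ u ∧ ENNReal.ofReal u < Rb} := by
  obtain rfl : γ₀ = lipschitzMean L := funext hγ₀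
  obtain rfl : γc = taylorMean L := funext hγc
  obtain rfl : q = fun r => gaussNewtonRate α β κ (lipschitzMean L r) (taylorMean L r) r :=
    funext hq
  subst hα hβ hκ hRb
  have hF : ∀ x ∈ U, ∀ v, HasLineDerivAt ℝ F (F' x v) x v := fun x hx v =>
    hasLineDerivAt_iff_tendsto_slope_zero.2 (hdiff x (hUΩ hx) v)
  have hU : StarConvex ℝ xs U := starConvex_iff_segment_subset.2 fun x hx => by
    rw [segment_eq_image']
    rintro _ ⟨t, ht, rfl⟩
    exact hstar x hx t ht
  have hanti : AntilipschitzWith ‖S ∘L adjoint (F' xs)‖₊ (F' xs) :=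
    (S ∘L adjoint (F' xs)).lipschitz.to_rightInverse (DFunLike.congr_fun hS1)
  obtain ⟨hstep, hcont, hstrict⟩ := stmt_14_general hF hconv hlsc hxsU hU hxsJ hmin hanti hLcont
    (hLpos 0 le_rfl (by simpa using hR)) (fun u hu v hv huv => hLmono u v hu.1 huv hv.2) hcen
  refine ⟨fun r hr hrR hball x hx => hstep x (hball hx) ⟨norm_nonneg _, ?_⟩, hcont, hstrict⟩
  exact ((ENNReal.ofReal_lt_ofReal_iff hr).2 (mem_ball_iff_norm.1 hx)).trans_le hrR
end

section
/- Assume the hypotheses of the local convergence theorem for the proximal Gauss–Newton method, with F′ satisfying the RADIUS Lipschitz condition of center x* with CONSTANT average L on U, and h := ((1+√2)κ + 1)·αβ²L < 1. Define q : [0, 1/(βL)) → ℝ₊ by q(r) = β/(1 − βLr) · { (βL²r² + κLr)/(2(1 − βLr)) + (1+√2)αβ²L²r/(1 − βLr) + ((1+√2)κ + 1)αβL/(1 − βLr) }; then q is continuous and strictly increasing, and for r̄ := (1/(βL))·[ (2 + κ/2 + (1+√2)αβ²L) − √( (2 + κ/2 + (1+√2)αβ²L)² − 2(1 − h) ) ]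 and any r with 0 < r ≤ r̄ and B_r(x*) ⊆ U, and any x₀ ∈ B_r(x*), the proximal Gauss–Newton sequence (x_{n+1} the unique minimizer of z ↦ ½‖F(x_n) + F′(x_n)(z − x_n)‖² + J(z)) is well-defined, stays in B_r(x*), and satisfies ‖x_n − x*‖ ≤ q(‖x₀ − x*‖)ⁿ ‖x₀ − x*‖ with q(‖x₀ − x*‖) < 1. -/
open scoped ENNReal
open ContinuousLinearMap

/-!
Both the solution `x*` and the next iterate `y` are first-order stationary, so both satisfy a
subgradient inequality for `J`. Monotonicity of the subdifferential eliminates `J` and leaves an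
inequality between inner products in `Y`, with `e = y - x*`:
`‖F'(x) e‖² ≤ -⟪F(x) - F(x*) - F'(x)(x - x*), F'(x) e⟫ - ⟪F(x*), (F'(x) - F'(x*)) e⟫`.
By the radius Lipschitz condition, the first bracket has norm at most `L‖x - x*‖²/2` and `F'(x)` is
bounded below with constant `β/(1 - βL‖x - x*‖)`, being a small perturbation of `F'(x*)`. The
resulting contraction factor is at most `q(‖x - x*‖)`, and `r̄` is the smaller root of the quadratic
equation `q = 1`.
-/

namespace ProxGaussNewton

open Filter Set Topology

section ExtendedReal

variable {E : Type*} {J : E → WithTop ℝ}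

/-- Convexity of an extended-real-valued function. Mathlib's `ConvexOn` does not apply, since
`WithTop ℝ` is not a real module. -/
def IsConvex [AddCommGroup E] [Module ℝ E] (J : E → WithTop ℝ) : Prop :=
  ∀ x y : E, ∀ a b : ℝ, 0 ≤ a → 0 ≤ b → a + b = 1 →
    J (a • x + b • y) ≤ (a : WithTop ℝ) * J x + (b : WithTop ℝ) * J y

lemma IsConvex.le_coe [AddCommGroup E] [Module ℝ E] (hJ : IsConvex J) {x y : E} {u v a b : ℝ}
    (hx : J x = u) (hy : J y = v) (ha : 0 ≤ a) (hb : 0 ≤ b) (hab : a + b = 1) :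
    J (a • x + b • y) ≤ ((a * u + b * v : ℝ) : WithTop ℝ) := by
  have h := hJ x y a b ha hb hab
  rw [hx, hy] at h
  exact_mod_cast h

lemma lowerSemicontinuous_coe_add [TopologicalSpace E] {f : E → ℝ} (hf : Continuous f)
    (hJ : LowerSemicontinuous J) :
    LowerSemicontinuous fun x => (f x : WithTop ℝ) + J x := by
  intro x w hw
  lift w to ℝ using hw.ne_top
  obtain ⟨ε, hε, hJε⟩ : ∃ ε : ℝ, 0 < ε ∧ ((w - f x + ε : ℝ) : WithTop ℝ) < J x := by
    cases hx : J x with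
    | top => exact ⟨1, one_pos, WithTop.coe_lt_top _⟩
    | coe j =>
      have hwj : w < f x + j := by simp only [hx] at hw; exact_mod_cast hw
      exact ⟨(f x + j - w) / 2, by linarith, by norm_cast; linarith⟩
  filter_upwards [hJ x _ hJε, hf.continuousAt.eventually (lt_mem_nhds (sub_lt_self (f x) hε))]
    with z hJz hfz
  cases hz : J z with
  | top => simp
  | coe j =>
    have hj : w - f x + ε < j := WithTop.coe_lt_coe.1 (hz ▸ hJz)
    exact_mod_cast (show w < f z + j by linarith)

-- Minimizing sequences are Cauchy, because the sublevel sets shrink to a point.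
theorem exists_forall_le_of_midpoint_gap [NormedAddCommGroup E] [NormedSpace ℝ E] [CompleteSpace E]
    {Φ : E → WithTop ℝ} (hlsc : LowerSemicontinuous Φ) {x₀ : E} (hx₀ : Φ x₀ ≠ ⊤) {m C : ℝ}
    (hm : ∀ z, (m : WithTop ℝ) ≤ Φ z)
    (hgap : ∀ (y z : E) (u v : ℝ), (u : WithTop ℝ) ≤ Φ (midpoint ℝ y z) → Φ y ≤ v → Φ z ≤ v →
      dist y z ^ 2 ≤ C * (v - u)) :
    ∃ y, ∀ z, Φ y ≤ Φ z := by
  obtain ⟨μ, hμ⟩ : ∃ μ, IsGLB {v : ℝ | ∃ z, Φ z = v} μ := by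
    refine Real.exists_isGLB ⟨(Φ x₀).untop hx₀, x₀, by simp⟩ ⟨m, ?_⟩
    rintro v ⟨z, hz⟩
    exact WithTop.coe_le_coe.1 (hz ▸ hm z)
  have hμ_le (z : E) : (μ : WithTop ℝ) ≤ Φ z := by
    cases hz : Φ z with
    | top => exact le_top
    | coe v => exact WithTop.coe_le_coe.2 (hμ.1 ⟨z, hz⟩)
  have hexists (n : ℕ) : ∃ z, Φ z ≤ ((μ + 1 / ((n : ℝ) + 1) : ℝ) : WithTop ℝ) := by
    obtain ⟨v, ⟨z, hz⟩, -, hv⟩ := hμ.exists_between (lt_add_of_pos_right μ Nat.one_div_pos_of_nat)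
    exact ⟨z, hz ▸ WithTop.coe_le_coe.2 hv.le⟩
  choose z hz using hexists
  have hz_mono {N n : ℕ} (hn : N ≤ n) : Φ (z n) ≤ ((μ + 1 / ((N : ℝ) + 1) : ℝ) : WithTop ℝ) :=
    (hz n).trans (WithTop.coe_le_coe.2 (by gcongr))
  have hcauchy : CauchySeq z := by
    refine cauchySeq_of_le_tendsto_0 (fun N : ℕ => √(C * (1 / ((N : ℝ) + 1))))
      (fun n l N hn hl => ?_)
      (by simpa using ((tendsto_one_div_add_atTop_nhds_zero_nat (𝕜 := ℝ)).const_mul C).sqrt)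
    have h := hgap (z n) (z l) μ _ (hμ_le _) (hz_mono hn) (hz_mono hl)
    rw [add_sub_cancel_left] at h
    exact Real.le_sqrt_of_sq_le h
  obtain ⟨y, hy⟩ := cauchySeq_tendsto_of_complete hcauchy
  have hy_le (N : ℕ) : Φ y ≤ ((μ + 1 / ((N : ℝ) + 1) : ℝ) : WithTop ℝ) :=
    (hlsc.isClosed_preimage _).mem_of_tendsto hy
      ((eventually_ge_atTop N).mono fun _ hn => hz_mono hn)
  have hlim : Tendsto (fun N : ℕ => ((μ + 1 / ((N : ℝ) + 1) : ℝ) : WithTop ℝ)) atTop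
      (𝓝 (μ : WithTop ℝ)) :=
    (WithTop.continuous_coe.tendsto μ).comp
      (by simpa using (tendsto_one_div_add_atTop_nhds_zero_nat (𝕜 := ℝ)).const_add μ)
  exact ⟨y, fun z => (ge_of_tendsto' hlim hy_le).trans (hμ_le z)⟩

end ExtendedReal

section Subgradient

variable {X : Type*} [NormedAddCommGroup X] [NormedSpace ℝ X] {J : X → WithTop ℝ}

/-- `ℓ` is a subgradient of `J` at `y`, that is, `ℓ ∈ ∂J(y)`. At a point where `J y = ⊤` this forces
`J = ⊤` identically. -/
def IsSubgradientAt (J : X → WithTop ℝ) (ℓ : StrongDual ℝ X) (y : X) : Prop :=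
  ∀ z, J y + ((ℓ (z - y) : ℝ) : WithTop ℝ) ≤ J z

lemma IsSubgradientAt.monotone {ℓx ℓy : StrongDual ℝ X} {x y : X} (hx : IsSubgradientAt J ℓx x)
    (hy : IsSubgradientAt J ℓy y) (hJx : J x ≠ ⊤) : 0 ≤ (ℓy - ℓx) (y - x) := by
  have hxy := hx y
  have hyx := hy x
  lift J x to ℝ using hJx with u
  cases hv : J y with
  | top => simp [hv] at hyx
  | coe v =>
    rw [hv] at hxy hyx
    norm_cast at hxy hyx
    rw [← neg_sub y x, map_neg] at hyx
    rw [sub_apply]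
    linarith

-- Along the segment from `y` to `z`, convexity bounds the increment of `J` by `t * (J z - J y)`.
theorem IsConvex.isSubgradientAt_neg_of_isLocalMin (hJ : IsConvex J) {f : X → ℝ}
    {ℓ : StrongDual ℝ X} {y : X} (hf : ∀ v, HasLineDerivAt ℝ f (ℓ v) y v) (hJy : J y ≠ ⊤)
    (hmin : IsLocalMin (fun x => (f x : WithTop ℝ) + J x) y) : IsSubgradientAt J (-ℓ) y := by
  intro z
  cases hz : J z with
  | top => exact le_top
  | coe w =>
    lift J y to ℝ using hJy with u hu
    suffices u - w ≤ ℓ (z - y) by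
      rw [neg_apply]
      norm_cast
      linarith
    have hline : Tendsto (fun t : ℝ => y + t • (z - y)) (𝓝[>] 0) (𝓝 y) := by
      have hcont : Continuous fun t : ℝ => y + t • (z - y) := by fun_prop
      simpa using (hcont.tendsto 0).mono_left nhdsWithin_le_nhds
    refine ge_of_tendsto (hf (z - y)).tendsto_slope_zero_right ?_
    filter_upwards [hline.eventually hmin, Ioo_mem_nhdsGT one_pos] with t hmin_t ⟨ht0, ht1⟩
    have hconv := hJ.le_coe hu.symm hz (sub_nonneg.2 ht1.le) ht0.le (sub_add_cancel 1 t)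
    rw [show (1 - t) • y + t • z = y + t • (z - y) by module] at hconv
    have hle := hmin_t.trans (add_le_add_right hconv _)
    rw [← hu] at hle
    norm_cast at hle
    rw [smul_eq_mul, le_inv_mul_iff₀ ht0]
    linarith

end Subgradient

section Objective

variable {X Y : Type*} [NormedAddCommGroup X] [NormedSpace ℝ X] [NormedAddCommGroup Y]
  [InnerProductSpace ℝ Y] {J : X → WithTop ℝ}

/-- The regularized least-squares objective `½‖G‖² + J`. -/
noncomputable def objective (J : X → WithTop ℝ) (G : X → Y) (z : X) : WithTop ℝ :=
  ((2⁻¹ * ‖G z‖ ^ 2 : ℝ) : WithTop ℝ) + J z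

/-- The affine model `z ↦ c + T (z - x)` of a map with value `c` and derivative `T` at `x`. The
Gauss–Newton subproblem at `x` replaces `F` by `affineModel (F x) (F' x) x`. -/
def affineModel (c : Y) (T : X →L[ℝ] Y) (x z : X) : Y :=
  c + T (z - x)

/-- `y` is a possible next iterate of the proximal Gauss–Newton method after `x`: it minimizes the
objective of the model of `F` linearized at `x`. -/
def IsProxGaussNewtonStep (F : X → Y) (F' : X → X →L[ℝ] Y) (J : X → WithTop ℝ) (x y : X) : Prop :=
  ∀ z, objective J (affineModel (F x) (F' x) x) y ≤ objective J (affineModel (F x) (F' x) x) z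

lemma continuous_affineModel (c : Y) (T : X →L[ℝ] Y) (x : X) : Continuous (affineModel c T x) := by
  unfold affineModel
  fun_prop

lemma hasLineDerivAt_affineModel (c : Y) (T : X →L[ℝ] Y) (x y v : X) :
    HasLineDerivAt ℝ (affineModel c T x) (T v) y v :=
  ((T.hasFDerivAt.comp y ((hasFDerivAt_id y).sub_const x)).const_add c).hasLineDerivAt v

lemma affineModel_midpoint (c : Y) (T : X →L[ℝ] Y) (x y z : X) :
    affineModel c T x (midpoint ℝ y z) =
      (2⁻¹ : ℝ) • (affineModel c T x y + affineModel c T x z) := by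
  simp only [affineModel, midpoint_eq_smul_add, map_sub, map_smul, map_add, invOf_eq_inv]
  module

lemma hasLineDerivAt_half_norm_sq {G : X → Y} {G' : Y} {x v : X} (hG : HasLineDerivAt ℝ G G' x v) :
    HasLineDerivAt ℝ (fun z => 2⁻¹ * ‖G z‖ ^ 2) (inner ℝ (G x) G') x v := by
  refine (HasDerivAt.norm_sq hG |>.const_mul 2⁻¹).congr_deriv ?_
  simp

theorem IsConvex.isSubgradientAt_of_isLocalMin_objective (hJ : IsConvex J) {G : X → Y}
    {T : X →L[ℝ] Y} {y : X} (hG : ∀ v, HasLineDerivAt ℝ G (T v) y v) (hJy : J y ≠ ⊤)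
    (hmin : IsLocalMin (objective J G) y) : IsSubgradientAt J (-(innerSL ℝ (G y) ∘L T)) y :=
  hJ.isSubgradientAt_neg_of_isLocalMin (fun v => hasLineDerivAt_half_norm_sq (hG v)) hJy hmin

lemma exists_forall_le_half_norm_sq_affineModel_add {T : X →L[ℝ] Y} {b : ℝ} (hb : 0 ≤ b)
    (hT : ∀ v, ‖v‖ ≤ b * ‖T v‖) (c : Y) (x x₁ : X) (ℓ : StrongDual ℝ X) :
    ∃ m, ∀ z, m ≤ 2⁻¹ * ‖affineModel c T x z‖ ^ 2 + ℓ (z - x₁) := by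
  refine ⟨-(2⁻¹ * (‖ℓ‖ * b) ^ 2) - ‖ℓ‖ * (b * ‖c‖ + ‖x - x₁‖), fun z => ?_⟩
  set N := ‖affineModel c T x z‖ with hN
  have hTz : ‖T (z - x)‖ ≤ N + ‖c‖ := by
    simpa [hN, affineModel] using norm_sub_le (affineModel c T x z) c
  have hz : ‖z - x₁‖ ≤ b * (N + ‖c‖) + ‖x - x₁‖ := by
    refine (norm_sub_le_norm_sub_add_norm_sub z x x₁).trans ?_
    grw [hT (z - x), hTz]
  have hℓ : -(‖ℓ‖ * (b * (N + ‖c‖) + ‖x - x₁‖)) ≤ ℓ (z - x₁) := by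
    grw [← hz]
    exact neg_le_of_abs_le (ℓ.le_opNorm (z - x₁))
  linarith [sq_nonneg (N - ‖ℓ‖ * b)]

lemma IsConvex.dist_sq_le_of_objective_affineModel_le (hJ : IsConvex J) {T : X →L[ℝ] Y} {b : ℝ}
    (hT : ∀ v, ‖v‖ ≤ b * ‖T v‖) {c : Y} {x y z : X} {u v : ℝ}
    (hmid : (u : WithTop ℝ) ≤ objective J (affineModel c T x) (midpoint ℝ y z))
    (hy : objective J (affineModel c T x) y ≤ v) (hz : objective J (affineModel c T x) z ≤ v) :
    dist y z ^ 2 ≤ 8 * b ^ 2 * (v - u) := by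
  obtain ⟨j, hj⟩ : ∃ j : ℝ, J y = j := by
    cases h : J y with
    | top => simp [objective, h] at hy
    | coe j => exact ⟨j, rfl⟩
  obtain ⟨k, hk⟩ : ∃ k : ℝ, J z = k := by
    cases h : J z with
    | top => simp [objective, h] at hz
    | coe k => exact ⟨k, rfl⟩
  have hJmid := hJ.le_coe (a := 2⁻¹) (b := 2⁻¹) hj hk (by norm_num) (by norm_num) (by norm_num)
  rw [← smul_add, ← invOf_eq_inv, ← midpoint_eq_smul_add] at hJmid
  simp only [objective, hj, hk] at hy hz
  replace hmid := hmid.trans (add_le_add_right hJmid _)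
  rw [affineModel_midpoint, norm_smul] at hmid
  norm_cast at hy hz hmid
  set p := affineModel c T x y with hp
  set q := affineModel c T x z with hq
  have hpq : T (y - z) = p - q := by
    rw [hp, hq, affineModel, affineModel, add_sub_add_left_eq_sub, ← map_sub,
      sub_sub_sub_cancel_right]
  have hgap : ‖p - q‖ ^ 2 ≤ 8 * (v - u) := by
    norm_num [mul_pow] at hmid
    linarith [parallelogram_law_with_norm ℝ p q]
  calc dist y z ^ 2 ≤ (b * ‖p - q‖) ^ 2 := by rw [dist_eq_norm, ← hpq]; gcongr; exact hT _
    _ = b ^ 2 * ‖p - q‖ ^ 2 := mul_pow ..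
    _ ≤ b ^ 2 * (8 * (v - u)) := by gcongr
    _ = 8 * b ^ 2 * (v - u) := by ring

theorem IsConvex.exists_forall_objective_affineModel_le [CompleteSpace X] (hJ : IsConvex J)
    (hlsc : LowerSemicontinuous J) {x₁ : X} {ℓ : StrongDual ℝ X} (hJx₁ : J x₁ ≠ ⊤)
    (hℓ : IsSubgradientAt J ℓ x₁) {T : X →L[ℝ] Y} {b : ℝ} (hb : 0 ≤ b)
    (hT : ∀ v, ‖v‖ ≤ b * ‖T v‖) (c : Y) (x : X) :
    ∃ y, ∀ z, objective J (affineModel c T x) y ≤ objective J (affineModel c T x) z := by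
  obtain ⟨m, hm⟩ := exists_forall_le_half_norm_sq_affineModel_add hb hT c x x₁ ℓ
  obtain ⟨u, hu⟩ := WithTop.ne_top_iff_exists.1 hJx₁
  have hcont : Continuous fun z => 2⁻¹ * ‖affineModel c T x z‖ ^ 2 :=
    ((continuous_affineModel c T x).norm.pow 2).const_mul _
  refine exists_forall_le_of_midpoint_gap (lowerSemicontinuous_coe_add hcont hlsc) (x₀ := x₁)
    (m := u + m) (C := 8 * b ^ 2) ?_ (fun z => ?_)
    fun y z u v => hJ.dist_sq_le_of_objective_affineModel_le hT
  · exact WithTop.add_ne_top.2 ⟨WithTop.coe_ne_top, hJx₁⟩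
  · refine le_trans ?_ (add_le_add_right (hℓ z) _)
    rw [← hu]
    norm_cast
    linarith [hm z]

end Objective

section Derivative

variable {X Y : Type*} [NormedAddCommGroup X] [NormedSpace ℝ X]

/-- The radius Lipschitz condition of center `xs` with constant average `L` on `U`. -/
def IsRadiusLipschitzOn [NormedAddCommGroup Y] [NormedSpace ℝ Y] (F' : X → X →L[ℝ] Y) (xs : X)
    (L : ℝ) (U : Set X) : Prop :=
  ∀ x ∈ U, ∀ t ∈ Icc (0 : ℝ) 1, ‖F' x - F' (xs + t • (x - xs))‖ ≤ (1 - t) * L * ‖x - xs‖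

lemma norm_le_opNorm_mul_norm_of_comp_eq_one [NormedAddCommGroup Y] [NormedSpace ℝ Y]
    {P : Y →L[ℝ] X} {T : X →L[ℝ] Y} (hPT : P ∘L T = 1) (v : X) : ‖v‖ ≤ ‖P‖ * ‖T v‖ := by
  simpa only [← comp_apply, hPT, one_apply_eq_self] using P.le_opNorm (T v)

section

variable [NormedAddCommGroup Y] [NormedSpace ℝ Y] {F : X → Y} {F' : X → X →L[ℝ] Y} {U : Set X}
  {xs x : X} {L : ℝ}

lemma IsRadiusLipschitzOn.norm_sub_le (hrad : IsRadiusLipschitzOn F' xs L U) (hx : x ∈ U) :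
    ‖F' x - F' xs‖ ≤ L * ‖x - xs‖ := by
  simpa using hrad x hx 0 (by simp)

theorem IsRadiusLipschitzOn.norm_taylor_remainder_le (hrad : IsRadiusLipschitzOn F' xs L U)
    (hF : ∀ y ∈ U, ∀ v, HasLineDerivAt ℝ F (F' y v) y v) (hseg : segment ℝ xs x ⊆ U) :
    ‖F x - F xs - F' x (x - xs)‖ ≤ L * ‖x - xs‖ ^ 2 / 2 := by
  set v := x - xs with hv
  have hmem {t : ℝ} (ht : t ∈ Icc (0 : ℝ) 1) : xs + t • v ∈ U :=
    hseg (segment_eq_image' ℝ xs x ▸ mem_image_of_mem _ ht)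
  have hderiv (t : ℝ) (ht : t ∈ Icc (0 : ℝ) 1) :
      HasDerivAt (fun s : ℝ => F (xs + s • v) - F xs - s • F' x v)
        (F' (xs + t • v) v - F' x v) t := by
    have hcurve : HasDerivAt (fun s : ℝ => F (xs + s • v)) (F' (xs + t • v) v) t := by
      rw [hasDerivAt_iff_tendsto_slope_zero]
      simpa only [add_smul, add_assoc] using (hF _ (hmem ht) v).tendsto_slope_zero
    have h := (hcurve.sub_const (F xs)).sub ((hasDerivAt_id t).smul_const (F' x v))
    rwa [one_smul] at h
  have hbound (t : ℝ) : HasDerivAt (fun s : ℝ => L * ‖v‖ ^ 2 * (s - s ^ 2 / 2))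
      (L * ‖v‖ ^ 2 * (1 - t)) t := by
    simpa using
      ((hasDerivAt_id t).sub ((hasDerivAt_pow 2 t).div_const 2)).const_mul (L * ‖v‖ ^ 2)
  have hle := image_norm_le_of_norm_deriv_right_le_deriv_boundary
    (fun t ht => (hderiv t ht).continuousAt.continuousWithinAt)
    (fun t ht => (hderiv t (Ico_subset_Icc_self ht)).hasDerivWithinAt) (by simp) hbound
    (fun t ht => ?_) (right_mem_Icc.2 zero_le_one)
  · rw [one_smul, one_smul, hv, add_sub_cancel, ← hv] at hle
    linarith
  · calc ‖F' (xs + t • v) v - F' x v‖ ≤ ‖F' (xs + t • v) - F' x‖ * ‖v‖ :=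
          (F' (xs + t • v) - F' x).le_opNorm v
      _ ≤ (1 - t) * L * ‖v‖ * ‖v‖ := by
          grw [norm_sub_rev, hrad x (hseg (right_mem_segment ℝ xs x)) t (Ico_subset_Icc_self ht)]
      _ = L * ‖v‖ ^ 2 * (1 - t) := by ring

lemma norm_le_div_mul_norm_of_norm_sub_le {T T₀ : X →L[ℝ] Y} {β ε : ℝ} (hβ : 0 ≤ β)
    (hT₀ : ∀ v, ‖v‖ ≤ β * ‖T₀ v‖) (hT : ‖T - T₀‖ ≤ ε) (hε : β * ε < 1) (v : X) :
    ‖v‖ ≤ β / (1 - β * ε) * ‖T v‖ := by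
  have hT₀v : ‖T₀ v‖ ≤ ‖T v‖ + ε * ‖v‖ := by
    calc ‖T₀ v‖ = ‖T v - (T - T₀) v‖ := by simp
      _ ≤ ‖T v‖ + ‖(T - T₀) v‖ := norm_sub_le _ _
      _ ≤ ‖T v‖ + ε * ‖v‖ := by grw [(T - T₀).le_opNorm v, hT]
  rw [div_mul_eq_mul_div, le_div_iff₀ (sub_pos.2 hε)]
  linarith [hT₀ v, mul_le_mul_of_nonneg_left hT₀v hβ]

lemma one_le_mul_opNorm {T : X →L[ℝ] Y} {β : ℝ} (hβ : 0 ≤ β) (hT : ∀ v, ‖v‖ ≤ β * ‖T v‖) {v : X}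
    (hv : v ≠ 0) : 1 ≤ β * ‖T‖ := by
  refine le_of_mul_le_mul_right ?_ (norm_pos_iff.2 hv)
  grw [one_mul, hT v, T.le_opNorm v, mul_assoc]

lemma injective_and_isClosed_range [CompleteSpace X] {T : X →L[ℝ] Y} {b : ℝ}
    (hT : ∀ v, ‖v‖ ≤ b * ‖T v‖) : Function.Injective T ∧ IsClosed (range T) := by
  have hanti : AntilipschitzWith b.toNNReal T := by
    refine AddMonoidHomClass.antilipschitz_of_bound T fun v => (hT v).trans ?_
    grw [← Real.le_coe_toNNReal]
  exact ⟨hanti.injective, hanti.isClosed_range T.uniformContinuous⟩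

end

theorem norm_sub_le_of_isSubgradientAt [NormedAddCommGroup Y] [InnerProductSpace ℝ Y]
    {J : X → WithTop ℝ} {T T₀ : X →L[ℝ] Y} {c c₀ : Y} {x xs y : X} {b : ℝ}
    (hy : IsSubgradientAt J (-(innerSL ℝ (affineModel c T x y) ∘L T)) y)
    (hxs : IsSubgradientAt J (-(innerSL ℝ c₀ ∘L T₀)) xs) (hJxs : J xs ≠ ⊤) (hb : 0 ≤ b)
    (hT : ∀ v, ‖v‖ ≤ b * ‖T v‖) :
    ‖y - xs‖ ≤ b * (‖c - c₀ - T (x - xs)‖ + ‖c₀‖ * (‖T - T₀‖ * b)) := by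
  set e := y - xs with he
  set w := c - c₀ - T (x - xs) with hw
  have hmodel : affineModel c T x y = w + c₀ + T e := by
    rw [affineModel, hw, he, map_sub, map_sub, map_sub]
    abel
  have hmono : ‖T e‖ ^ 2 ≤ -inner ℝ w (T e) - inner ℝ c₀ ((T - T₀) e) := by
    have h := hxs.monotone hy hJxs
    simp only [hmodel, sub_apply, neg_apply, comp_apply, innerSL_apply_apply, inner_add_left,
      real_inner_self_eq_norm_sq, ← he] at h
    rw [sub_apply, inner_sub_right]
    linarith
  have hinner_w : -inner ℝ w (T e) ≤ ‖w‖ * ‖T e‖ :=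
    neg_le.2 (neg_le_of_abs_le (abs_real_inner_le_norm w (T e)))
  have hinner_c₀ : -inner ℝ c₀ ((T - T₀) e) ≤ ‖c₀‖ * (‖T - T₀‖ * (b * ‖T e‖)) := by
    grw [← hT e, ← (T - T₀).le_opNorm e]
    exact neg_le.2 (neg_le_of_abs_le (abs_real_inner_le_norm c₀ _))
  have hTe : ‖T e‖ ≤ ‖w‖ + ‖c₀‖ * (‖T - T₀‖ * b) := by
    rcases (norm_nonneg (T e)).eq_or_lt with hzero | hpos
    · rw [← hzero]
      positivity
    · refine le_of_mul_le_mul_right ?_ hpos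
      linarith
  grw [hT e, hTe]

end Derivative

section ContractionFactor

/-- The contraction factor `q` in the dimensionless variable `u = βLr`, with
`a = κ/2 + (1+√2)αβ²L`. -/
noncomputable def scaledFactor (a h u : ℝ) : ℝ :=
  (u ^ 2 / 2 + a * u + h) / (1 - u) ^ 2

variable {a h u : ℝ}

lemma scaledFactor_nonneg (ha : 0 ≤ a) (hh : 0 ≤ h) (hu : 0 ≤ u) : 0 ≤ scaledFactor a h u := by
  unfold scaledFactor
  positivity

lemma continuousOn_scaledFactor (a h : ℝ) : ContinuousOn (scaledFactor a h) (Iio 1) := by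
  unfold scaledFactor
  refine ContinuousOn.div (by fun_prop) (by fun_prop) fun u hu => ?_
  exact pow_ne_zero 2 (sub_pos.2 hu).ne'

lemma strictMonoOn_scaledFactor (ha : 0 ≤ a) (hh : 0 ≤ h) :
    StrictMonoOn (scaledFactor a h) (Ico 0 1) := by
  intro u hu v hv huv
  have hv1 : 0 < 1 - v := sub_pos.2 hv.2
  have hu0 : 0 ≤ u := hu.1
  have hv0 : 0 ≤ v := hv.1
  have hsq : u ^ 2 < v ^ 2 := by gcongr
  have hlin : a * u ≤ a * v := by gcongr
  exact div_lt_div₀ (by linarith) (by gcongr) (by positivity) (by positivity)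

-- `q(u) < 1` is the inequality `u² - 2 (2 + a) u + 2 (1 - h) > 0`.
lemma scaledFactor_lt_one (ha : 0 ≤ a) (hh : 0 ≤ h)
    (hu : u < 2 + a - √((2 + a) ^ 2 - 2 * (1 - h))) : u < 1 ∧ scaledFactor a h u < 1 := by
  have hroot : 1 + a < √((2 + a) ^ 2 - 2 * (1 - h)) := Real.lt_sqrt_of_sq_lt (by linarith)
  have hu1 : u < 1 := by linarith
  refine ⟨hu1, ?_⟩
  have hsq : (2 + a) ^ 2 - 2 * (1 - h) < (2 + a - u) ^ 2 :=
    (Real.sqrt_lt' (by linarith)).1 (by linarith)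
  rw [scaledFactor, div_lt_one (pow_pos (sub_pos.2 hu1) 2)]
  linarith

/-- The contraction factor `q(r)` of the local convergence theorem. -/
noncomputable def contractionFactor (α β κ L r : ℝ) : ℝ :=
  β / (1 - β * L * r) *
    ((β * L ^ 2 * r ^ 2 + κ * L * r) / (2 * (1 - β * L * r))
      + (1 + √2) * α * β ^ 2 * L ^ 2 * r / (1 - β * L * r)
      + ((1 + √2) * κ + 1) * α * β * L / (1 - β * L * r))

/-- The convergence radius `r̄` of the local convergence theorem, with
`h = ((1+√2)κ + 1)αβ²L` substituted. -/
noncomputable def convergenceRadius (α β κ L : ℝ) : ℝ :=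
  1 / (β * L) *
    ((2 + κ / 2 + (1 + √2) * α * β ^ 2 * L)
      - √((2 + κ / 2 + (1 + √2) * α * β ^ 2 * L) ^ 2
        - 2 * (1 - ((1 + √2) * κ + 1) * α * β ^ 2 * L)))

variable {α β κ L r : ℝ}

lemma contractionFactor_eq_scaledFactor (hr : β * L * r < 1) :
    contractionFactor α β κ L r =
      scaledFactor (κ / 2 + (1 + √2) * α * β ^ 2 * L) (((1 + √2) * κ + 1) * α * β ^ 2 * L)
        (β * L * r) := by
  have : 1 - β * L * r ≠ 0 := (sub_pos.2 hr).ne'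
  rw [contractionFactor, scaledFactor]
  field_simp
  ring

lemma eqOn_contractionFactor (α κ : ℝ) (hβL : 0 < β * L) :
    EqOn (contractionFactor α β κ L)
      (scaledFactor (κ / 2 + (1 + √2) * α * β ^ 2 * L) (((1 + √2) * κ + 1) * α * β ^ 2 * L) ∘
        (β * L * ·)) (Ico 0 (1 / (β * L))) :=
  fun _ hr => contractionFactor_eq_scaledFactor ((lt_div_iff₀' hβL).1 hr.2)

lemma mapsTo_mul_Ico_one (hβL : 0 < β * L) : MapsTo (β * L * ·) (Ico 0 (1 / (β * L))) (Ico 0 1) :=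
  fun _ hr => ⟨mul_nonneg hβL.le hr.1, (lt_div_iff₀' hβL).1 hr.2⟩

lemma continuousOn_contractionFactor (α κ : ℝ) (hβL : 0 < β * L) :
    ContinuousOn (contractionFactor α β κ L) (Ico 0 (1 / (β * L))) :=
  ((continuousOn_scaledFactor _ _).comp (by fun_prop)
    ((mapsTo_mul_Ico_one hβL).mono_right Ico_subset_Iio_self)).congr
    (eqOn_contractionFactor α κ hβL)

lemma strictMonoOn_contractionFactor (hα : 0 ≤ α) (hκ : 0 ≤ κ) (hL : 0 ≤ L) (hβL : 0 < β * L) :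
    StrictMonoOn (contractionFactor α β κ L) (Ico 0 (1 / (β * L))) :=
  ((strictMonoOn_scaledFactor (by positivity) (by positivity)).comp
    (fun _ _ _ _ h => mul_lt_mul_of_pos_left h hβL) (mapsTo_mul_Ico_one hβL)).congr
    (eqOn_contractionFactor α κ hβL).symm

lemma contractionFactor_nonneg (hα : 0 ≤ α) (hκ : 0 ≤ κ) (hβ : 0 ≤ β) (hL : 0 ≤ L) (hr : 0 ≤ r)
    (hr1 : β * L * r < 1) : 0 ≤ contractionFactor α β κ L r := by
  rw [contractionFactor_eq_scaledFactor hr1]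
  exact scaledFactor_nonneg (by positivity) (by positivity) (by positivity)

lemma contractionFactor_lt_one (hα : 0 ≤ α) (hκ : 0 ≤ κ) (hL : 0 ≤ L) (hβL : 0 < β * L)
    (hr : r < convergenceRadius α β κ L) : r < 1 / (β * L) ∧ contractionFactor α β κ L r < 1 := by
  rw [convergenceRadius, one_div, lt_inv_mul_iff₀ hβL, add_assoc] at hr
  obtain ⟨hr1, hlt⟩ := scaledFactor_lt_one (by positivity) (by positivity) hr
  exact ⟨(lt_div_iff₀' hβL).2 hr1, contractionFactor_eq_scaledFactor hr1 ▸ hlt⟩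

lemma sharp_bound_le_contractionFactor_mul (hα : 0 ≤ α) (hβ : 0 ≤ β) (hκ : 1 ≤ κ) (hL : 0 ≤ L)
    (hr : 0 ≤ r) (hr1 : β * L * r < 1) :
    β / (1 - β * L * r) * (L * r ^ 2 / 2 + α * (L * r * (β / (1 - β * L * r)))) ≤
      contractionFactor α β κ L r * r := by
  have h1 : 0 < 1 - β * L * r := sub_pos.2 hr1
  have hlhs : β / (1 - β * L * r) * (L * r ^ 2 / 2 + α * (L * r * (β / (1 - β * L * r)))) =
      (β * L * r * (1 - β * L * r) / 2 + α * β ^ 2 * L) / (1 - β * L * r) ^ 2 * r := by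
    field_simp
  rw [hlhs, contractionFactor_eq_scaledFactor hr1, scaledFactor]
  gcongr ?_ / _ * _
  have hquad : β * L * r * (1 - β * L * r) ≤ (β * L * r) ^ 2 + κ * (β * L * r) := by
    nlinarith [show 0 ≤ β * L * r by positivity]
  have hlin : 0 ≤ (1 + √2) * α * β ^ 2 * L * (β * L * r) := by positivity
  have hconst : 0 ≤ (1 + √2) * κ * (α * β ^ 2 * L) := by positivity
  linarith

end ContractionFactor

lemma exists_seq_dist_le_pow_mul {M : Type*} [PseudoMetricSpace M] {R : M → M → Prop} {xs x₀ : M}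
    {θ : ℝ} (hθ0 : 0 ≤ θ) (hθ1 : θ ≤ 1)
    (hR : ∀ x, dist x xs ≤ dist x₀ xs → ∃ y, R x y ∧ dist y xs ≤ θ * dist x xs) :
    ∃ seq : ℕ → M, seq 0 = x₀ ∧ ∀ n, R (seq n) (seq (n + 1)) ∧
      dist (seq n) xs ≤ θ ^ n * dist x₀ xs ∧ dist (seq n) xs ≤ dist x₀ xs := by
  choose! next hnextR hnext using hR
  have hpow_le (n : ℕ) : θ ^ n * dist x₀ xs ≤ dist x₀ xs :=
    mul_le_of_le_one_left dist_nonneg (pow_le_one₀ hθ0 hθ1)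
  have hdist (n : ℕ) : dist (next^[n] x₀) xs ≤ θ ^ n * dist x₀ xs := by
    induction n with
    | zero => simp
    | succ n ih =>
      rw [Function.iterate_succ_apply']
      grw [hnext _ (ih.trans (hpow_le n)), ih, pow_succ', mul_assoc]
  refine ⟨fun n => next^[n] x₀, rfl, fun n => ⟨?_, hdist n, (hdist n).trans (hpow_le n)⟩⟩
  simpa only [Function.iterate_succ_apply'] using hnextR _ ((hdist n).trans (hpow_le n))

section Convergence

variable {X Y : Type*} [NormedAddCommGroup X] [NormedSpace ℝ X] [CompleteSpace X]
  [NormedAddCommGroup Y] [InnerProductSpace ℝ Y] {U : Set X} {F : X → Y} {F' : X → X →L[ℝ] Y}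
  {J : X → WithTop ℝ} {xs x : X} {β L : ℝ}

theorem exists_isProxGaussNewtonStep (hF : ∀ x ∈ U, ∀ v, HasLineDerivAt ℝ F (F' x v) x v)
    (hJ : IsConvex J) (hlsc : LowerSemicontinuous J) (hJxs : J xs ≠ ⊤)
    (hstat : IsSubgradientAt J (-(innerSL ℝ (F xs) ∘L F' xs)) xs) (hβ : 0 ≤ β)
    (hbound : ∀ v, ‖v‖ ≤ β * ‖F' xs v‖) (hL : 0 ≤ L) (hrad : IsRadiusLipschitzOn F' xs L U)
    (hseg : segment ℝ xs x ⊆ U) (hx : β * L * ‖x - xs‖ < 1) :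
    Function.Injective (F' x) ∧ IsClosed (range (F' x)) ∧
      ∃ y, IsProxGaussNewtonStep F F' J x y ∧
        ‖y - xs‖ ≤ contractionFactor ‖F xs‖ β (β * ‖F' xs‖) L ‖x - xs‖ * ‖x - xs‖ := by
  have hpert := hrad.norm_sub_le (hseg (right_mem_segment ℝ xs x))
  set b := β / (1 - β * L * ‖x - xs‖) with hb
  have hb0 : 0 ≤ b := div_nonneg hβ (sub_pos.2 hx).le
  have hboundx : ∀ v, ‖v‖ ≤ b * ‖F' x v‖ := by
    simpa only [hb, mul_assoc] using
      norm_le_div_mul_norm_of_norm_sub_le hβ hbound hpert (by rwa [← mul_assoc])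
  obtain ⟨y, hy⟩ := hJ.exists_forall_objective_affineModel_le hlsc hJxs hstat hb0 hboundx (F x) x
  obtain ⟨hinj, hclosed⟩ := injective_and_isClosed_range hboundx
  refine ⟨hinj, hclosed, y, hy, ?_⟩
  have hJy : J y ≠ ⊤ := fun h => by
    have htop := (hy xs).trans_lt
      (WithTop.lt_top_iff_ne_top.2 (WithTop.add_ne_top.2 ⟨WithTop.coe_ne_top, hJxs⟩))
    simp [objective, h] at htop
  have hsub := hJ.isSubgradientAt_of_isLocalMin_objective
    (hasLineDerivAt_affineModel (F x) (F' x) x y) hJy (Eventually.of_forall hy)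
  have hsharp : ‖y - xs‖ ≤ b * (L * ‖x - xs‖ ^ 2 / 2 + ‖F xs‖ * (L * ‖x - xs‖ * b)) := by
    grw [norm_sub_le_of_isSubgradientAt hsub hstat hJxs hb0 hboundx,
      hrad.norm_taylor_remainder_le hF hseg, hpert]
  rcases eq_or_ne x xs with rfl | hne
  · simpa using hsharp
  · exact hsharp.trans (sharp_bound_le_contractionFactor_mul (norm_nonneg _) hβ
      (one_le_mul_opNorm hβ hbound (sub_ne_zero.2 hne)) hL (norm_nonneg _) hx)

theorem exists_seq_isProxGaussNewtonStep (hF : ∀ x ∈ U, ∀ v, HasLineDerivAt ℝ F (F' x v) x v)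
    (hJ : IsConvex J) (hlsc : LowerSemicontinuous J) (hJxs : J xs ≠ ⊤)
    (hstat : IsSubgradientAt J (-(innerSL ℝ (F xs) ∘L F' xs)) xs) (hβ : 0 < β)
    (hbound : ∀ v, ‖v‖ ≤ β * ‖F' xs v‖) (hL : 0 < L) (hrad : IsRadiusLipschitzOn F' xs L U)
    {x₀ : X} (hball : Metric.closedBall xs ‖x₀ - xs‖ ⊆ U) (hx₀ : ‖x₀ - xs‖ < 1 / (β * L)) {θ : ℝ}
    (hθ : contractionFactor ‖F xs‖ β (β * ‖F' xs‖) L ‖x₀ - xs‖ ≤ θ) (hθ1 : θ ≤ 1) :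
    ∃ seq : ℕ → X, seq 0 = x₀ ∧ ∀ n,
      (IsProxGaussNewtonStep F F' J (seq n) (seq (n + 1)) ∧
        Function.Injective (F' (seq n)) ∧ IsClosed (range (F' (seq n)))) ∧
      ‖seq n - xs‖ ≤ θ ^ n * ‖x₀ - xs‖ ∧ ‖seq n - xs‖ ≤ ‖x₀ - xs‖ := by
  have hβL : 0 < β * L := mul_pos hβ hL
  have hθ0 : 0 ≤ θ := (contractionFactor_nonneg (norm_nonneg _) (by positivity) hβ.le hL.le
    (norm_nonneg _) ((lt_div_iff₀' hβL).1 hx₀)).trans hθ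
  simp only [← dist_eq_norm]
  refine exists_seq_dist_le_pow_mul (R := fun x y => IsProxGaussNewtonStep F F' J x y ∧
    Function.Injective (F' x) ∧ IsClosed (range (F' x))) hθ0 hθ1 fun x hx => ?_
  simp only [dist_eq_norm] at hx ⊢
  have hx_lt : ‖x - xs‖ < 1 / (β * L) := hx.trans_lt hx₀
  have hseg : segment ℝ xs x ⊆ U :=
    ((convex_closedBall xs _).segment_subset (Metric.mem_closedBall_self (norm_nonneg _))
      (mem_closedBall_iff_norm.2 hx)).trans hball
  obtain ⟨hinj, hclosed, y, hy, hle⟩ := exists_isProxGaussNewtonStep hF hJ hlsc hJxs hstat hβ.le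
    hbound hL.le hrad hseg ((lt_div_iff₀' hβL).1 hx_lt)
  have hθx : contractionFactor ‖F xs‖ β (β * ‖F' xs‖) L ‖x - xs‖ ≤ θ :=
    ((strictMonoOn_contractionFactor (norm_nonneg _) (by positivity) hL.le hβL).monotoneOn
      ⟨norm_nonneg _, hx_lt⟩ ⟨norm_nonneg _, hx₀⟩ hx).trans hθ
  exact ⟨y, ⟨hy, hinj, hclosed⟩, hle.trans (by gcongr)⟩

end Convergence

end ProxGaussNewton

open ProxGaussNewton Set in
theorem stmt_18_general {X Y : Type*} [NormedAddCommGroup X] [NormedSpace ℝ X] [CompleteSpace X]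
    [NormedAddCommGroup Y] [InnerProductSpace ℝ Y] {U : Set X} {F : X → Y} {F' : X → X →L[ℝ] Y}
    {J : X → WithTop ℝ} {xs : X} {β L : ℝ}
    (hF : ∀ x ∈ U, ∀ v, HasLineDerivAt ℝ F (F' x v) x v)
    (hJ : IsConvex J) (hlsc : LowerSemicontinuous J) (hJxs : J xs ≠ ⊤)
    (hstat : IsSubgradientAt J (-(innerSL ℝ (F xs) ∘L F' xs)) xs) (hβ : 0 ≤ β)
    (hbound : ∀ v, ‖v‖ ≤ β * ‖F' xs v‖) (hL : 0 < L) (hrad : IsRadiusLipschitzOn F' xs L U) :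
    let q := contractionFactor ‖F xs‖ β (β * ‖F' xs‖) L
    ContinuousOn q (Ico 0 (1 / (β * L))) ∧ StrictMonoOn q (Ico 0 (1 / (β * L))) ∧
    ∀ r ≤ convergenceRadius ‖F xs‖ β (β * ‖F' xs‖) L, Metric.ball xs r ⊆ U →
      ∀ x₀ ∈ Metric.ball xs r, q ‖x₀ - xs‖ < 1 ∧ ∃ seq : ℕ → X, seq 0 = x₀ ∧
        (∀ n, IsProxGaussNewtonStep F F' J (seq n) (seq (n + 1))) ∧
        ∀ n, seq n ∈ Metric.ball xs r ∧
          Function.Injective (F' (seq n)) ∧ IsClosed (range (F' (seq n))) ∧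
          ‖seq n - xs‖ ≤ q ‖x₀ - xs‖ ^ n * ‖x₀ - xs‖ := by
  intro q
  rcases hβ.eq_or_lt with rfl | hβpos
  · refine ⟨by simp, by simp [StrictMonoOn], fun r hr _ x₀ hx₀ => ?_⟩
    have hr_pos := Metric.pos_of_mem_ball hx₀
    simp only [convergenceRadius, zero_mul, div_zero] at hr
    exact absurd hr_pos hr.not_gt
  have hβL : 0 < β * L := mul_pos hβpos hL
  refine ⟨continuousOn_contractionFactor _ _ hβL,
    strictMonoOn_contractionFactor (norm_nonneg _) (by positivity) hL.le hβL,
    fun r hr hball x₀ hx₀ => ?_⟩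
  rw [mem_ball_iff_norm] at hx₀
  obtain ⟨hx₀_lt, hq1⟩ : ‖x₀ - xs‖ < 1 / (β * L) ∧ q ‖x₀ - xs‖ < 1 :=
    contractionFactor_lt_one (norm_nonneg _) (by positivity) hL.le hβL (hx₀.trans_le hr)
  obtain ⟨seq, hseq0, hseq⟩ := exists_seq_isProxGaussNewtonStep hF hJ hlsc hJxs hstat hβpos hbound
    hL hrad ((Metric.closedBall_subset_ball hx₀).trans hball) hx₀_lt le_rfl hq1.le
  refine ⟨hq1, seq, hseq0, fun n => (hseq n).1.1, fun n => ?_⟩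
  obtain ⟨⟨-, hinj, hclosed⟩, hpow, hle⟩ := hseq n
  exact ⟨mem_ball_iff_norm.2 (hle.trans_lt hx₀), hinj, hclosed, hpow⟩

/-- Local convergence of the proximal Gauss–Newton method with CONSTANT RADIUS Lipschitz
average `L`: with `h = ((1+√2)κ + 1)αβ²L < 1`, the function `q` below is continuous and
strictly increasing on `[0, 1/(βL))`, and for
`r̄ = (1/(βL))((2 + κ/2 + (1+√2)αβ²L) − √((2 + κ/2 + (1+√2)αβ²L)² − 2(1−h)))` and every
`0 < r ≤ r̄` with `B_r(x*) ⊆ U` and every `x₀ ∈ B_r(x*)` the proximal Gauss–Newton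
sequence is well-defined, stays in `B_r(x*)`, and satisfies
`‖xₙ − x*‖ ≤ q(‖x₀ − x*‖)ⁿ‖x₀ − x*‖` with `q(‖x₀ − x*‖) < 1`. -/
theorem stmt_18 {X Y : Type*} [NormedAddCommGroup X] [InnerProductSpace ℝ X] [CompleteSpace X]
    [NormedAddCommGroup Y] [InnerProductSpace ℝ Y] [CompleteSpace Y]
    (Ω U : Set X) (hΩopen : IsOpen Ω) (hΩne : Ω.Nonempty)
    (hUopen : IsOpen U) (hUΩ : U ⊆ Ω)
    (F : X → Y) (F' : X → (X →L[ℝ] Y))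
    -- `F` is Gâteaux differentiable on `Ω` with derivative `F'`
    (hdiff : ∀ x ∈ Ω, ∀ v : X,
      Filter.Tendsto (fun t : ℝ => t⁻¹ • (F (x + t • v) - F x))
        (nhdsWithin (0:ℝ) {(0:ℝ)}ᶜ) (nhds (F' x v)))
    -- `J` is proper, convex and lower semicontinuous
    (J : X → WithTop ℝ)
    (hproper : ∃ x, J x ≠ ⊤)
    (hconv : ∀ x y : X, ∀ a b : ℝ, 0 ≤ a → 0 ≤ b → a + b = 1 →
      J (a • x + b • y) ≤ (a : WithTop ℝ) * J x + (b : WithTop ℝ) * J y)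
    (hlsc : LowerSemicontinuous J)
    -- `x* ∈ U` and `U` is star-shaped with respect to `x*`
    (xs : X) (hxsU : xs ∈ U)
    (hstar : ∀ x ∈ U, ∀ t ∈ Set.Icc (0:ℝ) 1, xs + t • (x - xs) ∈ U)
    -- `x*` is a local minimizer of `Φ₀ = ½‖F·‖² + J` with `J(x*) < +∞`
    (hxsJ : J xs ≠ ⊤)
    (hmin : ∀ᶠ x in nhds xs,
      ((2⁻¹ * ‖F xs‖ ^ 2 : ℝ) : WithTop ℝ) + J xs
        ≤ ((2⁻¹ * ‖F x‖ ^ 2 : ℝ) : WithTop ℝ) + J x)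
    -- `F′(x*)` is injective with closed range, `S = (F′(x*)*F′(x*))⁻¹`
    (hinj : Function.Injective (F' xs)) (hcl : IsClosed (Set.range (F' xs)))
    (S : X →L[ℝ] X)
    (hS1 : S ∘L (adjoint (F' xs) ∘L F' xs) = 1)
    (hS2 : (adjoint (F' xs) ∘L F' xs) ∘L S = 1)
    -- `F′` is radius Lipschitz of center `x*` with constant average `L` on `U`
    (L : ℝ) (hLpos : 0 < L)
    (hrad : ∀ x ∈ U, ∀ t ∈ Set.Icc (0:ℝ) 1,
      ‖F' x - F' (xs + t • (x - xs))‖ ≤ (1 - t) * L * ‖x - xs‖)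
    -- the constants `α`, `β`, `κ` and `h`
    (α β κ h : ℝ)
    (hα : α = ‖F xs‖) (hβ : β = ‖S ∘L adjoint (F' xs)‖) (hκ : κ = β * ‖F' xs‖)
    (hh : h = ((1 + Real.sqrt 2) * κ + 1) * α * β ^ 2 * L) (hh1 : h < 1)
    -- the function `q` on `[0, 1/(βL))`
    (q : ℝ → ℝ)
    (hq : ∀ r : ℝ, q r = β / (1 - β * L * r) *
        ((β * L ^ 2 * r ^ 2 + κ * L * r) / (2 * (1 - β * L * r))
          + (1 + Real.sqrt 2) * α * β ^ 2 * L ^ 2 * r / (1 - β * L * r)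
          + ((1 + Real.sqrt 2) * κ + 1) * α * β * L / (1 - β * L * r)))
    -- the explicit radius `r̄`
    (rbar : ℝ)
    (hrbar : rbar = 1 / (β * L) *
        ((2 + κ / 2 + (1 + Real.sqrt 2) * α * β ^ 2 * L)
          - Real.sqrt ((2 + κ / 2 + (1 + Real.sqrt 2) * α * β ^ 2 * L) ^ 2
              - 2 * (1 - h)))) :
    ContinuousOn q (Set.Ico 0 (1 / (β * L))) ∧
    StrictMonoOn q (Set.Ico 0 (1 / (β * L))) ∧
    (∀ r : ℝ, 0 < r → r ≤ rbar → Metric.ball xs r ⊆ U →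
      ∀ x₀ ∈ Metric.ball xs r,
        q ‖x₀ - xs‖ < 1 ∧
        ∃ seq : ℕ → X, seq 0 = x₀ ∧
          (∀ n : ℕ, ∀ z : X,
            ((2⁻¹ * ‖F (seq n) + (F' (seq n)) (seq (n + 1) - seq n)‖ ^ 2 : ℝ) : WithTop ℝ)
                + J (seq (n + 1))
              ≤ ((2⁻¹ * ‖F (seq n) + (F' (seq n)) (z - seq n)‖ ^ 2 : ℝ) : WithTop ℝ) + J z) ∧
          (∀ n : ℕ, seq n ∈ Metric.ball xs r ∧
            Function.Injective (F' (seq n)) ∧ IsClosed (Set.range (F' (seq n))) ∧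
            ‖seq n - xs‖ ≤ q ‖x₀ - xs‖ ^ n * ‖x₀ - xs‖)) := by
  subst hα hβ hκ hh hrbar
  obtain rfl := funext hq
  have hF (x : X) (hx : x ∈ U) (v : X) : HasLineDerivAt ℝ F (F' x v) x v :=
    hasLineDerivAt_iff_tendsto_slope_zero.2 (hdiff x (hUΩ hx) v)
  have hstat := ProxGaussNewton.IsConvex.isSubgradientAt_of_isLocalMin_objective hconv
    (hF xs hxsU) hxsJ hmin
  have hbound := ProxGaussNewton.norm_le_opNorm_mul_norm_of_comp_eq_one
    (P := S ∘L adjoint (F' xs)) hS1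
  obtain ⟨hcont, hmono, hconvergence⟩ :=
    stmt_18_general hF hconv hlsc hxsJ hstat (norm_nonneg _) hbound hLpos hrad
  exact ⟨hcont, hmono, fun r _ => hconvergence r⟩
end
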